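/- arXiv:0803.3119 — 4 statements merged into one kernel-verified Lean document; each statement's English description precedes it below -/
import Mathlib

section
/- If α is a real algebraic number with α > 0 and α ≠ 1, and β is a real algebraic number that is not rational (i.e., β is irrational), then the real power α^β is transcendental over ℚ. -/
open Polynomial

lemma gs_rolle_card (f f' : ℝ → ℝ) (hf : ∀ x, HasDerivAt f (f' x) x) (s : Set ℝ)
    (hs : s.OrdConnected) (n : ℕ) (Z : Finset ℝ) (hZ : Z.card = n + 1)
    (hz : ∀ z ∈ Z, z ∈ s ∧ f z = 0) :
    ∃ Z' : Finset ℝ, Z'.card = n ∧ ∀ z ∈ Z', z ∈ s ∧ f' z = 0 := by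
  have hmem : ∀ i, Z.orderEmbOfFin hZ i ∈ Z := fun i => Finset.orderEmbOfFin_mem Z hZ i
  set e := Z.orderEmbOfFin hZ with he
  have key : ∀ i : Fin n, ∃ c ∈ Set.Ioo (e i.castSucc) (e i.succ), f' c = 0 := by
    intro i
    refine exists_hasDerivAt_eq_zero (f := f) (e.strictMono (Fin.castSucc_lt_succ)) ?_ ?_ ?_
    · exact fun x _ => (hf x).continuousAt.continuousWithinAt
    · rw [(hz _ (hmem _)).2, (hz _ (hmem _)).2]
    · exact fun x _ => hf x
  choose c hc hc0 using key
  have hmono : StrictMono c := by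
    intro i j hij
    have h1 := (hc i).2
    have h2 := (hc j).1
    have h3 : e i.succ ≤ e j.castSucc := by
      apply e.monotone
      rw [Fin.le_def]
      simp
      exact hij
    linarith
  refine ⟨Finset.univ.map ⟨c, hmono.injective⟩, by simp, ?_⟩
  intro z hz'
  simp only [Finset.mem_map, Finset.mem_univ, true_and, Function.Embedding.coeFn_mk] at hz'
  obtain ⟨i, rfl⟩ := hz'
  exact ⟨hs.out (hz _ (hmem _)).1 (hz _ (hmem _)).1 (Set.Ioo_subset_Icc_self (hc i)), hc0 i⟩

/-- Iterated Rolle. -/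
lemma gs_rolle_iter (n : ℕ) : ∀ (f : ℝ → ℝ) (_ : ContDiff ℝ (⊤ : ℕ∞) f) (s : Set ℝ)
    (_ : s.OrdConnected) (Z : Finset ℝ) (_ : Z.card = n + 1)
    (_ : ∀ z ∈ Z, z ∈ s ∧ f z = 0), ∃ x ∈ s, iteratedDeriv n f x = 0 := by
  induction n with
  | zero =>
    intro f hf s hs Z hZ hz
    obtain ⟨x, hx⟩ := Finset.card_pos.1 (by omega : 0 < Z.card)
    exact ⟨x, (hz x hx).1, by simpa using (hz x hx).2⟩
  | succ n ih =>
    intro f hf s hs Z hZ hz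
    obtain ⟨Z', h1, h2⟩ := gs_rolle_card f (deriv f)
      (fun x => (hf.differentiable (by simp) x).hasDerivAt) s hs (n + 1) Z hZ hz
    rw [iteratedDeriv_succ']
    refine ih (deriv f) ?_ s hs Z' h1 h2
    exact ((contDiff_infty_iff_deriv).1 hf).2

lemma gs_iteratedDeriv_poly (p : ℝ[X]) (n : ℕ) :
    iteratedDeriv n (fun x => p.eval x) = fun x => (derivative^[n] p).eval x := by
  induction n with
  | zero => simp
  | succ n ih =>
    rw [iteratedDeriv_succ, ih]
    ext x
    rw [Polynomial.deriv, Function.iterate_succ_apply']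

/-- Interpolation remainder. -/
lemma gs_remainder (n : ℕ) (f : ℝ → ℝ) (hf : ContDiff ℝ (⊤ : ℕ∞) f) (X M : ℝ)
    (Z : Finset ℝ) (hZ : Z.card = n) (hz : ∀ z ∈ Z, |z| ≤ X ∧ f z = 0)
    (hM : ∀ x, |x| ≤ X → |iteratedDeriv n f x| ≤ M) (y : ℝ) (hy : |y| ≤ X) :
    |f y| ≤ (2 * X) ^ n * M / n.factorial := by
  have hX : 0 ≤ X := (abs_nonneg y).trans hy
  have hM0 : 0 ≤ M := (abs_nonneg _).trans (hM y hy)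
  by_cases hyZ : y ∈ Z
  · rw [(hz y hyZ).2, abs_zero]; positivity
  set p : ℝ[X] := ∏ z ∈ Z, (Polynomial.X - C z) with hp
  have hpe : ∀ x, p.eval x = ∏ z ∈ Z, (x - z) := by
    intro x; rw [hp, eval_prod]; simp
  have hpy : p.eval y ≠ 0 := by
    rw [hpe, Finset.prod_ne_zero_iff]
    intro z hzZ h
    exact hyZ (by rwa [sub_eq_zero.1 h])
  have hpm : p.Monic := monic_prod_of_monic _ _ fun z _ => monic_X_sub_C z
  have hpd : p.natDegree = n := by
    rw [hp, natDegree_prod_of_monic _ _ fun z _ => monic_X_sub_C z]; simp [hZ]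
  have hdp : derivative^[n] p = C (n.factorial : ℝ) := by
    have h0 : (derivative^[n] p).natDegree = 0 := by
      have := natDegree_iterate_derivative p n
      omega
    rw [eq_C_of_natDegree_eq_zero h0, coeff_iterate_derivative]
    have : p.coeff n = 1 := by rw [← hpd]; exact hpm
    simp [this, Nat.descFactorial_self]
  set c := f y / p.eval y with hc
  have hpc : ContDiff ℝ (⊤ : ℕ∞) (fun x => c * p.eval x) :=
    contDiff_const.mul (by simpa [coe_aeval_eq_eval] using p.contDiff_aeval (𝕜 := ℝ) (⊤ : ℕ∞))
  have hg : ContDiff ℝ (⊤ : ℕ∞) (fun x => f x - c * p.eval x) := hf.sub hpc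
  obtain ⟨x, hx, hx0⟩ := gs_rolle_iter n _ hg (Set.Icc (-X) X) Set.ordConnected_Icc
    (insert y Z) (by rw [Finset.card_insert_of_notMem hyZ, hZ]) (by
      intro z hz'
      rcases Finset.mem_insert.1 hz' with rfl | h
      · exact ⟨abs_le.1 hy, by rw [hc]; field_simp; simp⟩
      · refine ⟨abs_le.1 (hz z h).1, ?_⟩
        rw [(hz z h).2, hpe, Finset.prod_eq_zero h (sub_self z)]; simp)
  rw [show (fun x => f x - c * p.eval x) = f - fun x => c * p.eval x from rfl,
    iteratedDeriv_sub (hf.contDiffAt.of_le (by exact_mod_cast le_top)) (hpc.contDiffAt.of_le (by exact_mod_cast le_top)),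
    iteratedDeriv_const_mul_field, gs_iteratedDeriv_poly, hdp] at hx0
  simp only [eval_C] at hx0
  have hfx : c * n.factorial = iteratedDeriv n f x := by linarith
  have hcM : |c| * n.factorial ≤ M := by
    have := hM x (abs_le.2 hx)
    rw [← hfx, abs_mul, Nat.abs_cast] at this
    exact this
  have hfy : |f y| = |c| * |p.eval y| := by
    rw [← abs_mul, hc, div_mul_cancel₀ _ hpy]
  have hpb : |p.eval y| ≤ (2 * X) ^ n := by
    rw [hpe, Finset.abs_prod, ← hZ]
    rw [← Finset.prod_const]
    refine Finset.prod_le_prod (fun _ _ => abs_nonneg _) ?_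
    intro z hz'
    have := (hz z hz').1
    calc |y - z| ≤ |y| + |z| := abs_sub _ _
      _ ≤ 2 * X := by linarith
  have hn : (0 : ℝ) < n.factorial := by positivity
  rw [hfy, le_div_iff₀ hn]
  calc |c| * |p.eval y| * n.factorial = |p.eval y| * (|c| * n.factorial) := by ring
    _ ≤ (2 * X) ^ n * M := by gcongr

lemma gs_deriv_bound (k D n : ℕ) (hk : k < D) (X W w x : ℝ) (hX : 1 ≤ X) (hW : 1 ≤ W)
    (hw : |w| ≤ W) (hx : |x| ≤ X) :
    |iteratedDeriv n (fun x : ℝ => x ^ k * Real.exp (w * x)) x| ≤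
      2 ^ n * W ^ n * ((D : ℝ) ^ D * X ^ D * Real.exp (W * X)) := by
  have h1 : iteratedDeriv n (fun x : ℝ => x ^ k * Real.exp (w * x)) x =
    ∑ i ∈ Finset.range (n + 1), (n.choose i : ℝ) * iteratedDeriv i (fun x : ℝ => x ^ k) x *
      iteratedDeriv (n - i) (fun x : ℝ => Real.exp (w * x)) x := by
    apply iteratedDeriv_mul (f := fun x : ℝ => x ^ k) (g := fun x : ℝ => Real.exp (w * x))
    · fun_prop
    · fun_prop
  rw [h1]
  have hD : (1 : ℝ) ≤ D := by exact_mod_cast (by omega : 1 ≤ D)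
  calc _ ≤ ∑ i ∈ Finset.range (n + 1), |(n.choose i : ℝ) * iteratedDeriv i (fun x : ℝ => x ^ k) x *
      iteratedDeriv (n - i) (fun x : ℝ => Real.exp (w * x)) x| := Finset.abs_sum_le_sum_abs _ _
    _ ≤ ∑ i ∈ Finset.range (n + 1), (n.choose i : ℝ) * ((D : ℝ) ^ D * X ^ D) * (W ^ n * Real.exp (W * X)) := by
      refine Finset.sum_le_sum fun i hi => ?_
      rw [abs_mul, abs_mul, Nat.abs_cast]
      gcongr
      · rw [iteratedDeriv_pow, abs_mul, Nat.abs_cast, abs_pow]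
        rcases le_or_gt i k with h | h
        · gcongr
          · calc ((k.descFactorial i : ℕ) : ℝ) ≤ (k : ℝ) ^ i := by
                  exact_mod_cast Nat.descFactorial_le_pow k i
              _ ≤ (D : ℝ) ^ i := by gcongr
              _ ≤ (D : ℝ) ^ D := pow_le_pow_right₀ hD (by omega)
          · calc |x| ^ (k - i) ≤ X ^ (k - i) := by gcongr
              _ ≤ X ^ D := pow_le_pow_right₀ hX (by omega)
        · rw [Nat.descFactorial_of_lt h]; simp; positivity
      · rw [iteratedDeriv_exp_const_mul, abs_mul, abs_pow, Real.abs_exp]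
        refine mul_le_mul ?_ (Real.exp_le_exp.2 ?_) (by positivity) (by positivity)
        · calc |w| ^ (n - i) ≤ W ^ (n - i) := by gcongr
            _ ≤ W ^ n := pow_le_pow_right₀ hW (by omega)
        · calc w * x ≤ |w * x| := le_abs_self _
            _ = |w| * |x| := abs_mul _ _
            _ ≤ W * X := by gcongr
    _ = _ := by
      rw [← Finset.sum_mul, ← Finset.sum_mul]
      have : ∑ i ∈ Finset.range (n + 1), (n.choose i : ℝ) = 2 ^ n := by
        exact_mod_cast Nat.sum_range_choose n
      rw [this]; ring

/-- Zero estimate for real exponential polynomials. -/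
lemma gs_zero_estimate {ι : Type*} [Fintype ι] [DecidableEq ι] (w : ι → ℝ)
    (hw : Function.Injective w) (N : ℕ) :
    ∀ (d : ι → ℕ) (P : ι → ℝ[X]) (_ : ∑ i, d i = N) (_ : ∀ i, P i ∈ degreeLT ℝ (d i))
    (_ : P ≠ 0) (Z : Finset ℝ)
    (_ : ∀ z ∈ Z, ∑ i, (P i).eval z * Real.exp (w i * z) = 0), Z.card < N := by
  induction N with
  | zero =>
    intro d P hd hP hP0 Z hZ
    exfalso; apply hP0
    funext i
    have : d i = 0 := by simpa using (Finset.sum_eq_zero_iff.1 hd) i (Finset.mem_univ i)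
    have h := hP i
    rw [this] at h
    simpa [mem_degreeLT] using h
  | succ N ih =>
    intro d P hd hP hP0 Z hZ
    obtain ⟨i₀, hi₀⟩ := Function.ne_iff.1 hP0
    have hdi : 1 ≤ d i₀ := by
      by_contra h
      have h0 : d i₀ = 0 := by omega
      have h := hP i₀
      rw [h0] at h
      exact hi₀ (by simpa [mem_degreeLT] using h)
    set Q : ι → ℝ[X] := fun i => derivative (P i) + C (w i - w i₀) * P i with hQ
    set d' : ι → ℕ := Function.update d i₀ (d i₀ - 1) with hd'
    have hsum : ∑ i, d' i = N := by
      rw [← Finset.add_sum_erase _ _ (Finset.mem_univ i₀)] at hd ⊢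
      have : ∑ x ∈ Finset.univ.erase i₀, d' x = ∑ x ∈ Finset.univ.erase i₀, d x := by
        refine Finset.sum_congr rfl fun x hx => ?_
        rw [hd', Function.update_of_ne (Finset.ne_of_mem_erase hx)]
      rw [this, hd', Function.update_self]
      omega
    have hder : ∀ (p : ℝ[X]), p ≠ 0 → (derivative p).degree < p.degree := fun p hp => degree_derivative_lt hp
    have hQd : ∀ i, Q i ∈ degreeLT ℝ (d' i) := by
      intro i
      by_cases hi : i = i₀
      · subst hi
        simp only [hQ, hd', Function.update_self, sub_self, C_0, zero_mul, add_zero]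
        rw [mem_degreeLT]
        have h1 := mem_degreeLT.1 (hP i)
        have h1' : (P i).natDegree < d i := (natDegree_lt_iff_degree_lt hi₀).2 h1
        by_cases h0 : derivative (P i) = 0
        · rw [h0, degree_zero]; exact WithBot.bot_lt_coe _
        rw [← natDegree_lt_iff_degree_lt h0]
        have h2 : (P i).natDegree ≠ 0 := by
          intro h; exact h0 (derivative_of_natDegree_zero h)
        have := natDegree_derivative_lt h2
        omega
      · simp only [hQ, hd', Function.update_of_ne hi]
        refine Submodule.add_mem _ ?_ ?_
        · rw [mem_degreeLT]
          exact lt_of_le_of_lt degree_derivative_le (mem_degreeLT.1 (hP i))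
        · rw [← smul_eq_C_mul]
          exact Submodule.smul_mem _ _ (hP i)
    by_cases hQ0 : Q = 0
    ·
      have hPi : ∀ i, i ≠ i₀ → P i = 0 := by
        intro i hi
        by_contra hne
        have h : derivative (P i) + C (w i - w i₀) * P i = 0 := congrFun hQ0 i
        have hww : w i - w i₀ ≠ 0 := sub_ne_zero.2 (fun h => hi (hw h))
        have h2 : (C (w i - w i₀) * P i).degree = (P i).degree := degree_C_mul hww
        have h3 : derivative (P i) = - (C (w i - w i₀) * P i) := by
          linear_combination h
        have h4 := hder _ hne
        rw [h3, degree_neg, h2] at h4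
        exact lt_irrefl _ h4
      have hc : derivative (P i₀) = 0 := by
        have h : derivative (P i₀) + C (w i₀ - w i₀) * P i₀ = 0 := congrFun hQ0 i₀
        simpa using h
      have hcst := derivative_eq_zero.1 hc
      rcases Finset.eq_empty_or_nonempty Z with rfl | ⟨z, hz⟩
      · simp
      exfalso
      have := hZ z hz
      rw [Finset.sum_eq_single i₀ (fun i _ hi => by rw [hPi i hi]; simp) (by simp)] at this
      have h5 := (mul_eq_zero.1 this).resolve_right (Real.exp_ne_zero _)
      rw [eq_C_of_natDegree_eq_zero hcst, eval_C] at h5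
      apply hi₀
      rw [eq_C_of_natDegree_eq_zero hcst, h5]; simp
    · by_contra hcard
      obtain ⟨Z1, hZ1, hZ1c⟩ := Finset.exists_subset_card_eq (not_lt.1 hcard)
      have hd : ∀ x : ℝ, HasDerivAt (fun x => ∑ i, (P i).eval x * Real.exp ((w i - w i₀) * x))
          (∑ i, (Q i).eval x * Real.exp ((w i - w i₀) * x)) x := by
        intro x
        apply HasDerivAt.fun_sum
        intro i _
        have h1 := (P i).hasDerivAt x
        have h2 : HasDerivAt (fun x => Real.exp ((w i - w i₀) * x))
            (Real.exp ((w i - w i₀) * x) * (w i - w i₀)) x := by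
          have := ((hasDerivAt_id x).const_mul (w i - w i₀)).exp
          simpa using this
        refine (h1.mul h2).congr_deriv ?_
        simp only [hQ, eval_add, eval_mul, eval_C]
        ring
      have hshift : ∀ (R : ι → ℝ[X]) (x : ℝ), ∑ i, (R i).eval x * Real.exp ((w i - w i₀) * x) =
          (∑ i, (R i).eval x * Real.exp (w i * x)) * Real.exp (- (w i₀ * x)) := by
        intro R x
        rw [Finset.sum_mul]
        refine Finset.sum_congr rfl fun i _ => ?_
        rw [mul_assoc, ← Real.exp_add]
        ring_nf
      obtain ⟨Z', h1, h2⟩ := gs_rolle_card _ _ hd Set.univ Set.ordConnected_univ N Z1 hZ1c (by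
        intro z hz
        refine ⟨Set.mem_univ _, ?_⟩
        rw [hshift, hZ z (hZ1 hz), zero_mul])
      have := ih d' Q hsum hQd hQ0 Z' (by
        intro z hz
        have := (h2 z hz).2
        rw [hshift] at this
        exact (mul_eq_zero.1 this).resolve_right (Real.exp_ne_zero _))
      omega
open NumberField

lemma gs_siegel (K : Type) [Field K] [NumberField K] : ∃ C : ℝ, 1 ≤ C ∧
    ∀ (α β : Type) [Fintype α] [Fintype β] (p : ℕ) (_ : 0 < p) (_ : Fintype.card α = p)
    (_ : Fintype.card β = 2 * p) (a : Matrix α β (𝓞 K)) (_ : a ≠ 0) (A : ℝ) (_ : 0 ≤ A)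
    (_ : ∀ k l, house (algebraMap (𝓞 K) K (a k l)) ≤ A),
    ∃ ξ : β → 𝓞 K, ξ ≠ 0 ∧ a.mulVec ξ = 0 ∧ ∀ l, house (algebraMap (𝓞 K) K (ξ l)) ≤ C * (p * A) := by
  classical
  obtain ⟨c, hc⟩ : ∃ c : ℝ, ∀ (α β : Type) [Fintype α] [Fintype β] (p q : ℕ) (_ : 0 < p)
    (_ : p < q) (_ : Fintype.card α = p)
    (_ : Fintype.card β = q) (a : Matrix α β (𝓞 K)) (_ : a ≠ 0) (A : ℝ)
    (_ : ∀ k l, house (algebraMap (𝓞 K) K (a k l)) ≤ A),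
    ∃ ξ : β → 𝓞 K, ξ ≠ 0 ∧ a.mulVec ξ = 0 ∧ ∀ l, house (algebraMap (𝓞 K) K (ξ l)) ≤
      c * ((c * q * A) ^ ((p : ℝ) / (q - p))) :=
    ⟨_, fun α β _ _ p q h0 hpq hα hβ a ha A hA =>
      NumberField.house.exists_ne_zero_int_vec_house_le K a ha h0 hpq hβ hA hα⟩
  refine ⟨max 1 (2 * c ^ 2), le_max_left _ _, ?_⟩
  intro α β _ _ p h0 hα hβ a ha A hA0 hA
  obtain ⟨ξ, h1, h2, h3⟩ := hc α β p (2 * p) h0 (by omega) hα hβ a ha A hA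
  refine ⟨ξ, h1, h2, fun l => (h3 l).trans ?_⟩
  have hp : (p : ℝ) ≠ 0 := by positivity
  have : (p : ℝ) / ((2 * p : ℕ) - p) = 1 := by
    push_cast
    rw [show (2 * (p : ℝ) - p) = p by ring, div_self hp]
  rw [this, Real.rpow_one]
  calc c * (c * ((2 * p : ℕ) : ℝ) * A) = (2 * c ^ 2) * (p * A) := by push_cast; ring
    _ ≤ _ := by gcongr; exact le_max_right _ _

lemma gs_liouville {K : Type} [Field K] [NumberField K] (τ : K →+* ℝ) (v : 𝓞 K) (hv : v ≠ 0)
    (B : ℝ) (hB : house (algebraMap (𝓞 K) K v) ≤ B) :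
    1 ≤ |τ (algebraMap (𝓞 K) K v)| * B ^ (Module.finrank ℚ K - 1) := by
  have h := norm_norm_le_norm_mul_house_pow (algebraMap (𝓞 K) K v) ((Complex.ofRealHom).comp τ)
  have h1 : ‖((Complex.ofRealHom).comp τ) (algebraMap (𝓞 K) K v)‖ = |τ (algebraMap (𝓞 K) K v)| := by simp
  rw [h1] at h
  have h2 : 1 ≤ ‖Algebra.norm ℚ (algebraMap (𝓞 K) K v)‖ := by
    rw [← Algebra.coe_norm_int]
    have : Algebra.norm ℤ v ≠ 0 := by rwa [Ne, Algebra.norm_eq_zero_iff]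
    have := Int.one_le_abs this
    rw [← Rat.norm_cast_real]
    simp only [Rat.cast_intCast, Real.norm_eq_abs]
    exact_mod_cast this
  refine h2.trans (h.trans ?_)
  gcongr
  exact house_nonneg _

lemma gs_den {K : Type} [Field K] [NumberField K] (a b g : K) : ∃ (d : ℕ) (a' b' g' : 𝓞 K),
    0 < d ∧ (algebraMap (𝓞 K) K a') = d * a ∧ (algebraMap (𝓞 K) K b') = d * b ∧ (algebraMap (𝓞 K) K g') = d * g := by
  have key : ∀ x : K, ∃ n : ℕ, 0 < n ∧ IsIntegral ℤ ((n : K) * x) := by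
    intro x
    obtain ⟨y, hy, hy2⟩ := IsAlgebraic.exists_integral_multiple
      ((IsFractionRing.isAlgebraic_iff ℤ ℚ K).2 (Algebra.IsAlgebraic.isAlgebraic (R := ℚ) x))
    refine ⟨y.natAbs, Int.natAbs_pos.2 hy, ?_⟩
    rw [zsmul_eq_mul] at hy2
    rcases Int.natAbs_eq y with h | h
    · rw [h] at hy2; simpa using hy2
    · rw [h] at hy2; simpa using hy2.neg
  obtain ⟨n1, h1, i1⟩ := key a
  obtain ⟨n2, h2, i2⟩ := key b
  obtain ⟨n3, h3, i3⟩ := key g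
  have hn : ∀ n : ℕ, IsIntegral ℤ (n : K) := fun n => by
    simpa using (isIntegral_algebraMap (R := ℤ) (A := K) (x := (n : ℤ)))
  refine ⟨n1 * n2 * n3, ⟨_, ((hn n2).mul (hn n3)).mul i1⟩, ⟨_, ((hn n1).mul (hn n3)).mul i2⟩,
    ⟨_, ((hn n1).mul (hn n2)).mul i3⟩, by positivity, ?_, ?_, ?_⟩ <;>
  · exact (RingOfIntegers.map_mk _ _).trans (by push_cast; ring)

lemma gs_entry {K : Type} [Field K] [NumberField K] (a b g : K) (d : ℕ) (a' b' g' : 𝓞 K)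
    (ha : (algebraMap (𝓞 K) K a') = d * a) (hb : (algebraMap (𝓞 K) K b') = d * b) (hg : (algebraMap (𝓞 K) K g') = d * g)
    (H : ℝ) (hH : 1 ≤ H) (hdH : d ≤ H) (haH : house (algebraMap (𝓞 K) K a') ≤ H) (hbH : house (algebraMap (𝓞 K) K b') ≤ H)
    (hgH : house (algebraMap (𝓞 K) K g') ≤ H) (m : ℕ) (hm : 1 ≤ m) (i j k l : ℕ) (hi : i < 2 * m ^ 2)
    (hj : j < 2 * m ^ 2) (hk : k < 2 * m ^ 3) (hl : l < m) :
    ∃ e : 𝓞 K, (algebraMap (𝓞 K) K e) = (d : K) ^ (6 * m ^ 3) * ((i + j * b) ^ k * a ^ (l * i) * g ^ (l * j)) ∧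
      house (algebraMap (𝓞 K) K e) ≤ (4 * H ^ 3 * m ^ 2) ^ (2 * m ^ 3) := by
  have hli : l * i ≤ 2 * m ^ 3 := by
    calc l * i ≤ m * (2 * m ^ 2) := Nat.mul_le_mul hl.le hi.le
      _ = 2 * m ^ 3 := by ring
  have hlj : l * j ≤ 2 * m ^ 3 := by
    calc l * j ≤ m * (2 * m ^ 2) := Nat.mul_le_mul hl.le hj.le
      _ = 2 * m ^ 3 := by ring
  have hnat : ∀ n : ℕ, house (n : K) = n := fun n => by
    have := house_intCast (K := K) (n : ℤ)
    simpa using this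
  have hpart : ∀ (x : K) (r : ℕ) (_ : r ≤ 2 * m ^ 3) (_ : house x ≤ H),
      house ((d : K) ^ (2 * m ^ 3 - r) * x ^ r) ≤ H ^ (2 * m ^ 3) := by
    intro x r hr hx
    calc house ((d : K) ^ (2 * m ^ 3 - r) * x ^ r)
        ≤ house ((d : K) ^ (2 * m ^ 3 - r)) * house (x ^ r) := house_mul_le _ _
      _ ≤ house (d : K) ^ (2 * m ^ 3 - r) * house x ^ r :=
        mul_le_mul (house_pow_le _ _) (house_pow_le _ _) (house_nonneg _)
          (pow_nonneg (house_nonneg _) _)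
      _ ≤ H ^ (2 * m ^ 3 - r) * H ^ r := by
        rw [hnat]
        have := house_nonneg x
        gcongr
      _ = _ := by rw [← pow_add]; congr 1; omega
  refine ⟨(d : 𝓞 K) ^ (2 * m ^ 3 - k) * (d * i + j * b') ^ k *
    ((d : 𝓞 K) ^ (2 * m ^ 3 - l * i) * a' ^ (l * i)) *
    ((d : 𝓞 K) ^ (2 * m ^ 3 - l * j) * g' ^ (l * j)), ?_, ?_⟩
  · simp only [map_mul, map_pow, map_add, map_natCast]
    rw [ha, hb, hg]
    have e1 : (d : K) ^ (6 * m ^ 3) = ((d : K) ^ (2 * m ^ 3 - k) * (d : K) ^ k) *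
      ((d : K) ^ (2 * m ^ 3 - l * i) * (d : K) ^ (l * i)) *
      ((d : K) ^ (2 * m ^ 3 - l * j) * (d : K) ^ (l * j)) := by
      simp only [← pow_add]; congr 1; omega
    rw [e1, show (d * i + j * (d * b) : K) = d * (i + j * b) by ring, mul_pow, mul_pow, mul_pow]
    ring
  · simp only [map_mul, map_pow, map_add, map_natCast]
    have hm1 : (1 : ℝ) ≤ m := by exact_mod_cast hm
    have hx : house ((d : K) * i + j * (algebraMap (𝓞 K) K b')) ≤ H * (4 * m ^ 2) := by
      have hi' : (i : ℝ) ≤ 2 * m ^ 2 := by exact_mod_cast hi.le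
      have hj' : (j : ℝ) ≤ 2 * m ^ 2 := by exact_mod_cast hj.le
      calc house ((d : K) * i + j * (algebraMap (𝓞 K) K b')) ≤ house ((d : K) * i) + house (j * (algebraMap (𝓞 K) K b')) :=
            house_add_le _ _
        _ = d * i + j * house (algebraMap (𝓞 K) K b') := by rw [house_nat_mul, house_nat_mul, hnat]
        _ ≤ H * (2 * m ^ 2) + (2 * m ^ 2) * H := by gcongr; exact house_nonneg _
        _ = _ := by ring
    have h1 : house ((d : K) ^ (2 * m ^ 3 - k) * (d * i + j * (algebraMap (𝓞 K) K b')) ^ k) ≤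
        (H * (4 * m ^ 2)) ^ (2 * m ^ 3) := by
      have h4 : (1 : ℝ) ≤ 4 * m ^ 2 := by nlinarith
      calc _ ≤ house ((d : K) ^ (2 * m ^ 3 - k)) * house ((d * i + j * (algebraMap (𝓞 K) K b')) ^ k) :=
            house_mul_le _ _
        _ ≤ house (d : K) ^ (2 * m ^ 3 - k) * house (d * i + j * (algebraMap (𝓞 K) K b')) ^ k :=
          mul_le_mul (house_pow_le _ _) (house_pow_le _ _) (house_nonneg _)
            (pow_nonneg (house_nonneg _) _)
        _ ≤ (H * (4 * m ^ 2)) ^ (2 * m ^ 3 - k) * (H * (4 * m ^ 2)) ^ k := by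
          rw [hnat]
          have : (d : ℝ) ≤ H * (4 * m ^ 2) := by nlinarith
          have := house_nonneg ((d : K) * i + j * (algebraMap (𝓞 K) K b'))
          gcongr
        _ = _ := by rw [← pow_add]; congr 1; omega
    have h2 := hpart (algebraMap (𝓞 K) K a') (l * i) hli haH
    have h3 := hpart (algebraMap (𝓞 K) K g') (l * j) hlj hgH
    calc _ ≤ _ := house_mul_le _ _
      _ ≤ (H * (4 * m ^ 2)) ^ (2 * m ^ 3) * H ^ (2 * m ^ 3) * H ^ (2 * m ^ 3) := by
        refine mul_le_mul ((house_mul_le _ _).trans ?_) h3 (house_nonneg _) (by positivity)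
        exact mul_le_mul h1 h2 (house_nonneg _) (by positivity)
      _ = _ := by rw [← mul_pow, ← mul_pow]; congr 1; ring

lemma gs_final (G c : ℝ) (hG : 0 < G) (E : ℕ)
    (h : ∀ m : ℕ, 1 ≤ m → ((m : ℝ) / G) ^ m ≤ c * (m : ℝ) ^ E) : False := by
  have ht := tendsto_pow_const_div_const_pow_of_one_lt E (one_lt_two : (1 : ℝ) < 2)
  have hc := ht.const_mul c
  rw [mul_zero] at hc
  have h1 := (hc.eventually (gt_mem_nhds (zero_lt_one))).and
    ((Filter.eventually_ge_atTop (⌈2 * G⌉₊)).and (Filter.eventually_ge_atTop 1))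
  obtain ⟨m, h2, h3, h4⟩ := h1.exists
  have h5 := h m h4
  have h6 : 2 * G ≤ m := Nat.ceil_le.1 h3
  have h7 : (2 : ℝ) ^ m ≤ ((m : ℝ) / G) ^ m := by
    gcongr
    rwa [le_div_iff₀ hG]
  have h8 : c * ((m : ℝ) ^ E / 2 ^ m) = (c * (m : ℝ) ^ E) / 2 ^ m := by ring
  rw [h8, div_lt_one (by positivity)] at h2
  linarith

lemma gs_step {K : Type} [Field K] [NumberField K] (τ : K →+* ℝ) (a b g : K)
    (ha0 : 0 < τ a) (ha1 : τ a ≠ 1) (hb : Irrational (τ b)) (hg : τ g = τ a ^ τ b)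
    (d : ℕ) (hd : 0 < d) (a' b' g' : 𝓞 K)
    (ha' : algebraMap (𝓞 K) K a' = d * a) (hb' : algebraMap (𝓞 K) K b' = d * b)
    (hg' : algebraMap (𝓞 K) K g' = d * g)
    (H : ℝ) (hH : 1 ≤ H) (hdH : d ≤ H) (haH : house (algebraMap (𝓞 K) K a') ≤ H)
    (hbH : house (algebraMap (𝓞 K) K b') ≤ H)
    (hgH : house (algebraMap (𝓞 K) K g') ≤ H) (C : ℝ) (hC1 : 1 ≤ C)
    (hC : ∀ (α β : Type) [Fintype α] [Fintype β] (p : ℕ) (_ : 0 < p) (_ : Fintype.card α = p)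
    (_ : Fintype.card β = 2 * p) (a : Matrix α β (𝓞 K)) (_ : a ≠ 0) (A : ℝ) (_ : 0 ≤ A)
    (_ : ∀ k l, house (algebraMap (𝓞 K) K (a k l)) ≤ A),
    ∃ ξ : β → 𝓞 K, ξ ≠ 0 ∧ a.mulVec ξ = 0 ∧
      ∀ l, house (algebraMap (𝓞 K) K (ξ l)) ≤ C * (p * A))
    (m : ℕ) (hm : 1 ≤ m) (A X W : ℝ) (hA : A = (4 * H ^ 3 * m ^ 2) ^ (2 * m ^ 3))
    (hX : X = 2 * (1 + |τ b|) * m ^ 2) (hW : W = (|Real.log (τ a)| + 1) * m) :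
    1 ≤ (d : ℝ) ^ (6 * m ^ 3) * ((2 * X) ^ (m ^ 4) * (2 * m ^ 4 * (C * (m ^ 4 * A)) *
      (2 ^ (m ^ 4) * W ^ (m ^ 4) * (((2 * m ^ 3 : ℕ) : ℝ) ^ (2 * m ^ 3) * X ^ (2 * m ^ 3) *
        Real.exp (W * X)))) / (m ^ 4).factorial) *
      (2 * m ^ 4 * (C * (m ^ 4 * A) * A)) ^ (Module.finrank ℚ K - 1) := by
  classical
  have hm1 : (1 : ℝ) ≤ m := by exact_mod_cast hm
  have hA0 : 0 ≤ A := by rw [hA]; positivity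
  set w := Real.log (τ a) with hw
  have hw0 : w ≠ 0 := Real.log_ne_zero_of_pos_of_ne_one ha0 ha1
  set θ := τ b with hθ
  have hm2 : (1 : ℝ) ≤ (m : ℝ) ^ 2 := one_le_pow₀ hm1
  have hX1 : 1 ≤ X := by rw [hX]; nlinarith [abs_nonneg θ]
  have hW1 : 1 ≤ W := by rw [hW]; nlinarith [abs_nonneg w]
  have hent : ∀ (i j : Fin (2 * m ^ 2)) (q : Fin (2 * m ^ 3) × Fin m), ∃ e : 𝓞 K,
      algebraMap (𝓞 K) K e = (d : K) ^ (6 * m ^ 3) * (((i : ℕ) + (j : ℕ) * b) ^ (q.1 : ℕ) *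
        a ^ ((q.2 : ℕ) * i) * g ^ ((q.2 : ℕ) * j)) ∧
      house (algebraMap (𝓞 K) K e) ≤ A := by
    intro i j q
    rw [hA]
    exact gs_entry a b g d a' b' g' ha' hb' hg' H hH hdH haH hbH hgH m hm i j q.1 q.2 i.2 j.2
      q.1.2 q.2.2
  choose e he heA using hent
  set pt : Fin (2 * m ^ 2) × Fin (2 * m ^ 2) → ℝ := fun p => (p.1 : ℕ) + (p.2 : ℕ) * θ with hpt
  have hptinj : Function.Injective pt := by
    rintro ⟨i, j⟩ ⟨i', j'⟩ h
    simp only [hpt] at h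
    have hj : (j : ℕ) = j' := by
      by_contra hne
      apply hb
      have hne' : ((j : ℕ) : ℝ) - (j' : ℕ) ≠ 0 := sub_ne_zero.2 (by exact_mod_cast hne)
      refine ⟨(((i' : ℕ) : ℚ) - (i : ℕ)) / ((j : ℕ) - (j' : ℕ)), ?_⟩
      push_cast
      rw [div_eq_iff hne']
      linarith
    have hi : (i : ℕ) = i' := by
      rw [hj] at h
      have : ((i : ℕ) : ℝ) = (i' : ℕ) := by linarith
      exact_mod_cast this
    exact Prod.ext (Fin.ext hi) (Fin.ext hj)
  have hptX : ∀ p, |pt p| ≤ X := by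
    rintro ⟨i, j⟩
    have hi : ((i : ℕ) : ℝ) ≤ 2 * m ^ 2 := by exact_mod_cast i.2.le
    have hj : ((j : ℕ) : ℝ) ≤ 2 * m ^ 2 := by exact_mod_cast j.2.le
    calc |pt (i, j)| ≤ |((i : ℕ) : ℝ)| + |((j : ℕ) : ℝ) * θ| := abs_add_le _ _
      _ = (i : ℕ) + (j : ℕ) * |θ| := by rw [abs_mul, Nat.abs_cast, Nat.abs_cast]
      _ ≤ 2 * m ^ 2 + 2 * m ^ 2 * |θ| := by gcongr
      _ = X := by rw [hX]; ring
  have hτe : ∀ i j q, τ (algebraMap (𝓞 K) K (e i j q)) =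
      (d : ℝ) ^ (6 * m ^ 3) * (pt (i, j) ^ (q.1 : ℕ) * Real.exp (((q.2 : ℕ) * w) * pt (i, j))) := by
    intro i j q
    rw [he]
    simp only [map_mul, map_pow, map_add, map_natCast]
    rw [hg, ← hθ, mul_assoc (_ ^ _)]
    congr 2
    have h1 : τ a = Real.exp w := (Real.exp_log ha0).symm
    rw [Real.rpow_def_of_pos ha0, ← hw, h1, ← Real.exp_nat_mul, ← Real.exp_nat_mul, ← Real.exp_add]
    congr 1
    simp only [hpt]
    push_cast
    ring
  have hle : m ^ 2 ≤ 2 * m ^ 2 := by omega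
  obtain ⟨ξ, hξ0, hξ1, hξ2⟩ := hC (Fin (m ^ 2) × Fin (m ^ 2)) (Fin (2 * m ^ 3) × Fin m) (m ^ 4)
    (by positivity) (by simp; ring) (by simp; ring)
    (fun p q => e (Fin.castLE hle p.1) (Fin.castLE hle p.2) q) (by
      intro h
      have hp : 0 < m ^ 2 := by positivity
      have hq : 0 < 2 * m ^ 3 := by positivity
      have h1 := congrFun (congrFun h (⟨0, hp⟩, ⟨0, hp⟩)) (⟨0, hq⟩, ⟨0, hm⟩)
      have h2 := hτe (Fin.castLE hle ⟨0, hp⟩) (Fin.castLE hle ⟨0, hp⟩) (⟨0, hq⟩, ⟨0, hm⟩)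
      simp only [Matrix.zero_apply] at h1
      rw [h1] at h2
      simp only [map_zero, pow_zero, one_mul, Nat.cast_zero, zero_mul, Real.exp_zero,
        mul_one] at h2
      exact (pow_ne_zero _ (Nat.cast_ne_zero.2 hd.ne')) h2.symm) A hA0 (fun p q => heA _ _ _)
  push_cast at hξ2
  set N : ℝ := C * (m ^ 4 * A) with hN
  have hN0 : 0 ≤ N := by positivity
  have hτξ : ∀ q, |τ (algebraMap (𝓞 K) K (ξ q))| ≤ N := by
    intro q
    refine le_trans ?_ (hξ2 q)
    have := norm_embedding_le_house (algebraMap (𝓞 K) K (ξ q)) ((Complex.ofRealHom).comp τ)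
    simpa using this
  set F : ℝ → ℝ := fun x => ∑ q : Fin (2 * m ^ 3) × Fin m, τ (algebraMap (𝓞 K) K (ξ q)) *
    (x ^ (q.1 : ℕ) * Real.exp (((q.2 : ℕ) * w) * x)) with hF
  have hFv : ∀ i j, τ (algebraMap (𝓞 K) K (∑ q, e i j q * ξ q)) =
      (d : ℝ) ^ (6 * m ^ 3) * F (pt (i, j)) := by
    intro i j
    simp only [map_sum, map_mul, hF]
    rw [Finset.mul_sum]
    refine Finset.sum_congr rfl fun q _ => ?_
    rw [hτe]; ring
  have hdpos : (0 : ℝ) < (d : ℝ) ^ (6 * m ^ 3) := by positivity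
  have hvan : ∀ p : Fin (m ^ 2) × Fin (m ^ 2),
      F (pt (Fin.castLE hle p.1, Fin.castLE hle p.2)) = 0 := by
    intro p
    have h1 := congrFun hξ1 p
    simp only [Matrix.mulVec, dotProduct, Pi.zero_apply] at h1
    have h2 := hFv (Fin.castLE hle p.1) (Fin.castLE hle p.2)
    rw [h1] at h2
    simp only [map_zero] at h2
    exact (mul_eq_zero.1 h2.symm).resolve_left hdpos.ne'
  obtain ⟨⟨i, j⟩, hnv⟩ : ∃ p, F (pt p) ≠ 0 := by
    by_contra! hall
    set P : Fin m → ℝ[X] := fun l => ∑ k : Fin (2 * m ^ 3),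
      Polynomial.C (τ (algebraMap (𝓞 K) K (ξ (k, l)))) * Polynomial.X ^ (k : ℕ) with hP
    have hlt := gs_zero_estimate (fun l : Fin m => ((l : ℕ) : ℝ) * w) (by
        intro l l' h
        have := mul_right_cancel₀ hw0 h
        exact Fin.ext (by exact_mod_cast this)) (2 * m ^ 4) (fun _ => 2 * m ^ 3) P
        (by simp; ring) (by
          intro l
          refine Submodule.sum_mem _ fun k _ => ?_
          rw [mem_degreeLT]
          refine lt_of_le_of_lt (degree_C_mul_X_pow_le _ _) ?_
          exact_mod_cast k.2) (by
          intro hP0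
          apply hξ0
          funext q
          have h1 := congrArg (fun p : ℝ[X] => p.coeff (q.1 : ℕ)) (congrFun hP0 q.2)
          simp only [hP, finsetSum_coeff, coeff_C_mul, coeff_X_pow, Pi.zero_apply,
            coeff_zero] at h1
          rw [Finset.sum_eq_single q.1 (by
            intro k _ hk
            rw [if_neg (fun h => hk (Fin.ext h.symm)), mul_zero]) (by simp)] at h1
          simpa using h1)
        (Finset.univ.image pt) (by
          intro z hz
          obtain ⟨p, _, rfl⟩ := Finset.mem_image.1 hz
          rw [← hall p]
          simp only [hF, hP, Fintype.sum_prod_type_right, eval_finsetSum, eval_mul, eval_C,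
            eval_pow, eval_X, Finset.sum_mul, mul_assoc])
    rw [Finset.card_image_of_injective _ hptinj] at hlt
    simp only [Finset.card_univ, Fintype.card_prod, Fintype.card_fin] at hlt
    have : 2 * m ^ 2 * (2 * m ^ 2) = 4 * m ^ 4 := by ring
    omega
  have hterm : ∀ q : Fin (2 * m ^ 3) × Fin m, ContDiff ℝ (⊤ : ℕ∞)
      (fun x : ℝ => (x ^ (q.1 : ℕ) * Real.exp (((q.2 : ℕ) * w) * x))) := by
    intro q; fun_prop
  have hterm' : ∀ q : Fin (2 * m ^ 3) × Fin m, ContDiff ℝ (⊤ : ℕ∞)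
      (fun x : ℝ => τ (algebraMap (𝓞 K) K (ξ q)) *
        (x ^ (q.1 : ℕ) * Real.exp (((q.2 : ℕ) * w) * x))) :=
    fun q => contDiff_const.mul (hterm q)
  have hFc : ContDiff ℝ (⊤ : ℕ∞) F := ContDiff.sum fun q _ => hterm' q
  set R : ℝ := (2 ^ (m ^ 4) * W ^ (m ^ 4) * (((2 * m ^ 3 : ℕ) : ℝ) ^ (2 * m ^ 3) * X ^ (2 * m ^ 3) *
        Real.exp (W * X))) with hR
  have hcard : ((Finset.univ : Finset (Fin (2 * m ^ 3) × Fin m)).card : ℝ) = 2 * m ^ 4 := by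
    simp; ring
  have hup : |F (pt (i, j))| ≤ (2 * X) ^ (m ^ 4) * (2 * m ^ 4 * N * R) / (m ^ 4).factorial := by
    refine gs_remainder (m ^ 4) F hFc X _ (Finset.univ.image
      fun p : Fin (m ^ 2) × Fin (m ^ 2) => pt (Fin.castLE hle p.1, Fin.castLE hle p.2)) ?_ ?_ ?_ _
      (hptX _)
    · rw [Finset.card_image_of_injective]
      · simp; ring
      · intro p p' h
        have := hptinj h
        simp only [Prod.mk.injEq, Fin.castLE_inj] at this
        exact Prod.ext this.1 this.2
    · intro z hz
      obtain ⟨p, _, rfl⟩ := Finset.mem_image.1 hz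
      exact ⟨hptX _, hvan p⟩
    · intro x hx
      rw [hF, iteratedDeriv_fun_sum fun q _ =>
        (hterm' q).contDiffAt.of_le (by exact_mod_cast le_top)]
      refine (Finset.abs_sum_le_sum_abs _ _).trans ?_
      calc _ ≤ ∑ q : Fin (2 * m ^ 3) × Fin m, N * R := by
            refine Finset.sum_le_sum fun q _ => ?_
            rw [iteratedDeriv_const_mul_field, abs_mul]
            refine mul_le_mul (hτξ q) ?_ (abs_nonneg _) hN0
            refine gs_deriv_bound _ (2 * m ^ 3) _ q.1.2 X W _ x hX1 hW1 ?_ hx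
            have hl : ((q.2 : ℕ) : ℝ) ≤ m := by exact_mod_cast q.2.2.le
            rw [abs_mul, Nat.abs_cast, hW, mul_comm]
            gcongr
            linarith
        _ = _ := by rw [Finset.sum_const, nsmul_eq_mul, hcard]; ring
  have hv0 : (∑ q, e i j q * ξ q) ≠ 0 := by
    intro h
    have := hFv i j
    rw [h] at this
    simp only [map_zero] at this
    exact (mul_ne_zero hdpos.ne' hnv) this.symm
  have hvH : house (algebraMap (𝓞 K) K (∑ q, e i j q * ξ q)) ≤ 2 * m ^ 4 * (N * A) := by
    rw [map_sum]
    refine (house_sum_le_sum_house _ _).trans ?_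
    calc _ ≤ ∑ q : Fin (2 * m ^ 3) × Fin m, N * A := by
          refine Finset.sum_le_sum fun q _ => ?_
          rw [map_mul, mul_comm N A]
          exact (house_mul_le _ _).trans
            (mul_le_mul (heA _ _ _) (hξ2 q) (house_nonneg _) hA0)
      _ = _ := by rw [Finset.sum_const, nsmul_eq_mul, hcard]
  have hL := gs_liouville τ _ hv0 _ hvH
  rw [hFv, abs_mul, abs_of_pos hdpos] at hL
  refine hL.trans ?_
  gcongr

lemma gs_main {K : Type} [Field K] [NumberField K] (τ : K →+* ℝ) (a b g : K)
    (ha0 : 0 < τ a) (ha1 : τ a ≠ 1) (hb : Irrational (τ b)) (hg : τ g = τ a ^ τ b) : False := by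
  obtain ⟨d, a', b', g', hd, ha', hb', hg'⟩ := gs_den a b g
  obtain ⟨C, hC1, hC⟩ := gs_siegel K
  have n1 := house_nonneg (algebraMap (𝓞 K) K a')
  have n2 := house_nonneg (algebraMap (𝓞 K) K b')
  have n3 := house_nonneg (algebraMap (𝓞 K) K g')
  have n4 : (0 : ℝ) ≤ d := by positivity
  obtain ⟨H, hH⟩ : ∃ H : ℝ, H = 1 + d + house (algebraMap (𝓞 K) K a') +
    house (algebraMap (𝓞 K) K b') + house (algebraMap (𝓞 K) K g') := ⟨_, rfl⟩
  have hstep := gs_step τ a b g ha0 ha1 hb hg d hd a' b' g' ha' hb' hg' H (by linarith)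
    (by linarith) (by linarith) (by linarith) (by linarith) C hC1 hC
  have hH0 : 0 < H := by linarith
  obtain ⟨B, hB⟩ : ∃ B : ℝ, B = 2 * (1 + |τ b|) := ⟨_, rfl⟩
  obtain ⟨r, hr⟩ : ∃ r : ℝ, r = |Real.log (τ a)| + 1 := ⟨_, rfl⟩
  rw [← hB, ← hr] at hstep
  have hB0 : 0 < B := by rw [hB]; positivity
  have hr0 : 0 < r := by rw [hr]; positivity
  generalize Module.finrank ℚ K - 1 = h at hstep
  have hd0 : (0 : ℝ) < d := by positivity
  refine gs_final (4 * B * r * Real.exp 1)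
    ((d : ℝ) ^ 6 * (2 * C) * (4 * H ^ 3) ^ 2 * (2 * B) ^ 2 * Real.exp (r * B) *
      (2 * C * (4 * H ^ 3) ^ 4) ^ h) (by positivity) (22 + 16 * h) ?_
  intro m hm
  have hm1 : (1 : ℝ) ≤ m := by exact_mod_cast hm
  have hm0 : (0 : ℝ) < m := by linarith
  have h1 := hstep m hm _ _ _ rfl rfl rfl
  set n := m ^ 4 with hn
  have hfac : (1 : ℝ) / (n.factorial : ℝ) ≤ Real.exp 1 ^ n / (m ^ 4) ^ n := by
    have := Real.pow_div_factorial_le_exp (n : ℝ) (by positivity) n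
    rw [← Real.exp_one_pow, hn] at this
    push_cast at this
    rw [div_le_div_iff₀ (by positivity) (by positivity)]
    rw [div_le_iff₀ (by positivity)] at this
    linarith
  have hbig : (2 * C * m ^ 8 : ℝ) ≤ (2 * C * m ^ 8) ^ (m ^ 3) := by
    apply le_self_pow₀
    · have : (1 : ℝ) ≤ (m : ℝ) ^ 8 := one_le_pow₀ hm1
      nlinarith
    · positivity
  have h2 : (1 : ℝ) ≤ (4 * B * r * Real.exp 1 / m) ^ n * (((d : ℝ) ^ 6 * (2 * C) * (4 * H ^ 3) ^ 2 *
      (2 * B) ^ 2 * Real.exp (r * B) *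
      (2 * C * (4 * H ^ 3) ^ 4) ^ h) * (m : ℝ) ^ (22 + 16 * h)) ^ (m ^ 3) := by
    refine h1.trans ?_
    set A : ℝ := (4 * H ^ 3 * m ^ 2) ^ (2 * m ^ 3) with hA
    have hA' : A = ((4 * H ^ 3 * m ^ 2) ^ 2) ^ (m ^ 3) := by rw [hA, pow_mul]
    have hA0 : 0 ≤ A := by positivity
    have e1 : Real.exp (r * m * (B * m ^ 2)) = Real.exp (r * B) ^ (m ^ 3) := by
      rw [← Real.exp_nat_mul]; congr 1; push_cast; ring
    calc _ = ((2 * (B * m ^ 2)) ^ n * 2 ^ n * (r * m) ^ n * (1 / (n.factorial : ℝ))) *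
          ((d : ℝ) ^ (6 * m ^ 3) * (2 * C * m ^ 8) * A * (((2 * m ^ 3 : ℕ) : ℝ) ^ (2 * m ^ 3) *
          (B * m ^ 2) ^ (2 * m ^ 3)) * Real.exp (r * m * (B * m ^ 2)) *
          ((2 * C * m ^ 8) * A ^ 2) ^ h) := by
            rw [show (2 * m ^ 4 * (C * (m ^ 4 * A) * A) : ℝ) = (2 * C * m ^ 8) * A ^ 2 by ring]
            ring
      _ ≤ ((2 * (B * m ^ 2)) ^ n * 2 ^ n * (r * m) ^ n * (Real.exp 1 ^ n / (m ^ 4) ^ n)) *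
          ((d : ℝ) ^ (6 * m ^ 3) * (2 * C * m ^ 8) ^ (m ^ 3) * A *
          (((2 * m ^ 3 : ℕ) : ℝ) ^ (2 * m ^ 3) *
          (B * m ^ 2) ^ (2 * m ^ 3)) * Real.exp (r * m * (B * m ^ 2)) *
          ((2 * C * m ^ 8) ^ (m ^ 3) * A ^ 2) ^ h) := by gcongr
      _ = _ := by
        rw [e1, hA']
        have e2 : ((2 * (B * m ^ 2)) ^ n * 2 ^ n * (r * m) ^ n * (Real.exp 1 ^ n / (m ^ 4) ^ n)) =
            (4 * B * r * Real.exp 1 / m) ^ n := by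
          rw [← div_pow, ← mul_pow, ← mul_pow, ← mul_pow]
          congr 1
          field_simp
          ring
        rw [e2]
        congr 1
        have e3 : ((2 * C * m ^ 8) ^ (m ^ 3) * (((4 * H ^ 3 * m ^ 2) ^ 2) ^ (m ^ 3)) ^ 2) ^ h =
            ((2 * C * (4 * H ^ 3) ^ 4) ^ h * (m : ℝ) ^ (16 * h)) ^ (m ^ 3) := by
          rw [← pow_mul, mul_comm (m ^ 3) 2, pow_mul _ 2, ← mul_pow, ← pow_mul, mul_comm (m ^ 3) h,
            pow_mul, pow_mul _ 16 h, ← mul_pow]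
          congr 2
          ring
        rw [e3, pow_mul, pow_mul, pow_mul]
        simp only [← mul_pow]
        congr 1
        push_cast
        rw [pow_add]
        ring
  set c := (d : ℝ) ^ 6 * (2 * C) * (4 * H ^ 3) ^ 2 * (2 * B) ^ 2 * Real.exp (r * B) *
      (2 * C * (4 * H ^ 3) ^ 4) ^ h with hc
  have hc0 : 0 ≤ c := by positivity
  have hn3 : n = m * m ^ 3 := by rw [hn]; ring
  rw [hn3, pow_mul, ← mul_pow] at h2
  have h3 : 1 ≤ (4 * B * r * Real.exp 1 / m) ^ m * (c * (m : ℝ) ^ (22 + 16 * h)) := by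
    by_contra! hlt
    have := pow_lt_one₀ (by positivity) hlt (show m ^ 3 ≠ 0 by positivity)
    linarith
  have h4 : ((m : ℝ) / (4 * B * r * Real.exp 1)) ^ m * (4 * B * r * Real.exp 1 / m) ^ m = 1 := by
    rw [← mul_pow]
    have : (m : ℝ) / (4 * B * r * Real.exp 1) * (4 * B * r * Real.exp 1 / m) = 1 := by
      field_simp
    rw [this, one_pow]
  calc ((m : ℝ) / (4 * B * r * Real.exp 1)) ^ m
      ≤ ((m : ℝ) / (4 * B * r * Real.exp 1)) ^ m *
        ((4 * B * r * Real.exp 1 / m) ^ m * (c * (m : ℝ) ^ (22 + 16 * h))) :=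
        le_mul_of_one_le_right (by positivity) h3
    _ = c * (m : ℝ) ^ (22 + 16 * h) := by rw [← mul_assoc, h4, one_mul]

/-- Gelfond–Schneider theorem (real form): if `α` is a positive real algebraic
number with `α ≠ 1` and `β` is a real algebraic irrational number, then
`α ^ β` (real power) is transcendental over `ℚ`. -/
theorem gelfond_schneider (α β : ℝ) (hα : IsAlgebraic ℚ α) (hα0 : 0 < α) (hα1 : α ≠ 1)
    (hβ : IsAlgebraic ℚ β) (hβirr : Irrational β) :
    Transcendental ℚ (α ^ β) := by
  intro hγ
  let K := IntermediateField.adjoin ℚ ({α, β, α ^ β} : Set ℝ)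
  have hfin : FiniteDimensional ℚ K := by
    apply IntermediateField.finiteDimensional_adjoin
    intro x hx
    simp only [Set.mem_insert_iff, Set.mem_singleton_iff] at hx
    rcases hx with rfl | rfl | rfl
    · exact hα.isIntegral
    · exact hβ.isIntegral
    · exact hγ.isIntegral
  have : NumberField K := { to_charZero := inferInstance, to_finiteDimensional := hfin }
  have hmem : ∀ x ∈ ({α, β, α ^ β} : Set ℝ), x ∈ K := fun x hx =>
    IntermediateField.subset_adjoin ℚ _ hx
  exact gs_main (K := K) (algebraMap K ℝ) ⟨α, hmem _ (by simp)⟩ ⟨β, hmem _ (by simp)⟩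
    ⟨α ^ β, hmem _ (by simp)⟩ hα0 hα1 hβirr rfl
end

section
/- For all positive natural numbers m and n with m ≠ n, the real number log(m/n) (the natural logarithm of the rational number m/n) is transcendental over ℚ. -/
open Polynomial

/-- Clearing denominators in the value of an integer polynomial. -/
theorem aux_integral_pow_mul_aeval {L : Type*} [Field L] (a : ℤ) (x : L)
    (hx : IsIntegral ℤ ((a : L) * x)) (g : ℤ[X]) (k : ℕ) (hk : g.natDegree ≤ k) :
    IsIntegral ℤ ((a : L) ^ k * aeval x g) := by
  rw [aeval_eq_sum_range, Finset.mul_sum]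
  refine IsIntegral.sum _ fun i hi => ?_
  have hi' : i ≤ k := by
    have := Finset.mem_range.mp hi
    omega
  have e : (a : L) ^ k * g.coeff i • x ^ i
      = ((g.coeff i * a ^ (k - i) : ℤ) : L) * ((a : L) * x) ^ i := by
    rw [zsmul_eq_mul]
    conv_lhs => rw [← Nat.sub_add_cancel hi', pow_add]
    push_cast
    ring
  rw [e]
  have h1 : IsIntegral ℤ (((g.coeff i * a ^ (k - i) : ℤ) : L)) :=
    isIntegral_algebraMap (R := ℤ) (A := L)
  exact h1.mul (hx.pow i)

/-- A common polynomial with nonzero constant term vanishing at finitely many nonzero points. -/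
theorem aux_common_poly {L : Type*} [Field L] [Algebra ℚ L] [FiniteDimensional ℚ L]
    (s : Finset L) (hs : ∀ x ∈ s, x ≠ 0) :
    ∃ f : ℤ[X], f.eval 0 ≠ 0 ∧ ∀ x ∈ s, aeval x f = 0 := by
  classical
  have h : ∀ x : L, ∃ q : ℤ[X], q.coeff 0 ≠ 0 ∧ (x ≠ 0 → aeval x q = 0) := by
    intro x
    by_cases hx : x = 0
    · exact ⟨1, by simp, fun h => absurd hx h⟩
    · have hq : IsAlgebraic ℚ x := Algebra.IsAlgebraic.isAlgebraic x
      have hz : IsAlgebraic ℤ x := (IsFractionRing.isAlgebraic_iff ℤ ℚ L).mpr hq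
      obtain ⟨q, h1, h2⟩ := hz.exists_nonzero_coeff_and_aeval_eq_zero
        (mem_nonZeroDivisors_of_ne_zero hx)
      exact ⟨q, h1, fun _ => h2⟩
  choose q hq0 hq using h
  refine ⟨∏ x ∈ s, q x, ?_, ?_⟩
  · rw [eval_prod, Finset.prod_ne_zero_iff]
    intro x _
    rw [← coeff_zero_eq_eval_zero]
    exact hq0 x
  · intro x hx
    rw [map_prod]
    exact Finset.prod_eq_zero hx (hq x (hs x hx))

theorem aux_exists_prime (C x : ℝ) (B : ℕ) :
    ∃ p : ℕ, p.Prime ∧ B < p ∧ C * (x ^ p / (p - 1).factorial) < 1 := by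
  have h := (FloorSemiring.tendsto_pow_div_factorial_atTop x).const_mul (C * x)
  rw [mul_zero] at h
  obtain ⟨N, hN⟩ := Filter.eventually_atTop.mp (h.eventually (gt_mem_nhds one_pos))
  obtain ⟨p, hp, hpp⟩ := Nat.exists_infinite_primes (N + B + 1)
  refine ⟨p, hpp, by omega, ?_⟩
  have := hN (p - 1) (by omega)
  have e : x ^ p = x * x ^ (p - 1) := by
    rw [← pow_succ', Nat.sub_add_cancel (by omega)]
  rw [e]
  calc C * (x * x ^ (p - 1) / (p - 1).factorial)
      = C * x * (x ^ (p - 1) / (p - 1).factorial) := by ring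
    _ < 1 := this

theorem aux_core {L : Type*} [Field L] [Algebra ℚ L] [FiniteDimensional ℚ L] (φ : L →ₐ[ℚ] ℂ)
    {ι : Type*} [DecidableEq L] (J : Finset ι) (c : ι → ℤ) (β : ι → L) (K : ℤ) (hK : K ≠ 0)
    (hβ : ∀ i ∈ J, β i ≠ 0)
    (hsum : (K : ℂ) + ∑ i ∈ J, (c i : ℂ) * Complex.exp (φ (β i)) = 0)
    (hrat : ∀ g : ℤ[X], ∑ i ∈ J, (c i : L) * aeval (β i) g ∈ Set.range (algebraMap ℚ L)) :
    False := by
  obtain ⟨f, hf0, hf⟩ := aux_common_poly (J.image β) (by simpa using hβ)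
  obtain ⟨a, ha0, ha⟩ := exists_integral_multiples ℤ ℚ (J.image β)
  obtain ⟨b, hb⟩ := LindemannWeierstrass.exp_polynomial_approx f hf0
  have hfne : f ≠ 0 := by rintro rfl; simp at hf0
  set D := f.natDegree with hD
  obtain ⟨p, hp, hpB, hlt⟩ := aux_exists_prime (∑ i ∈ J, |(c i : ℝ)|) (|(a : ℝ)| ^ D * b)
    ((eval 0 f).natAbs + K.natAbs + a.natAbs)
  obtain ⟨n, hn, g, hg, hr⟩ := hb p (by omega) hp
  -- the integer
  obtain ⟨Z, hZ⟩ : ∃ Z : ℤ, (a : L) ^ (p * D) * ∑ i ∈ J, (c i : L) * aeval (β i) g = Z := by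
    obtain ⟨q, hq⟩ := hrat g
    have hint : IsIntegral ℤ ((a : L) ^ (p * D) * ∑ i ∈ J, (c i : L) * aeval (β i) g) := by
      rw [Finset.mul_sum]
      refine IsIntegral.sum _ fun i hi => ?_
      have h1 := aux_integral_pow_mul_aeval a (β i)
        (by simpa using ha (β i) (Finset.mem_image_of_mem _ hi)) g (p * D) (by omega)
      have h2 : IsIntegral ℤ ((c i : L)) := isIntegral_algebraMap (R := ℤ) (A := L)
      rw [mul_left_comm]
      exact h2.mul h1
    have e : (a : L) ^ (p * D) * ∑ i ∈ J, (c i : L) * aeval (β i) g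
        = algebraMap ℚ L ((a : ℚ) ^ (p * D) * q) := by
      rw [← hq, map_mul, map_pow, map_intCast]
    rw [e] at hint ⊢
    rw [isIntegral_algebraMap_iff (algebraMap ℚ L).injective] at hint
    obtain ⟨Z, hZ⟩ := IsIntegrallyClosed.isIntegral_iff.mp hint
    exact ⟨Z, by rw [← hZ]; simp⟩
  have hZ' : (a : ℂ) ^ (p * D) * ∑ i ∈ J, (c i : ℂ) * aeval (φ (β i)) g = Z := by
    have := congrArg φ hZ
    simp only [map_mul, map_pow, map_sum, map_intCast] at this
    rw [← this]
    congr 1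
    refine Finset.sum_congr rfl fun i _ => ?_
    congr 1
    exact aeval_algHom_apply (φ.restrictScalars ℤ) (β i) g
  set M : ℤ := a ^ (p * D) * n * K + p * Z with hM
  have hMne : M ≠ 0 := by
    intro h0
    have hdvd : (p : ℤ) ∣ a ^ (p * D) * n * K := by
      refine ⟨-Z, ?_⟩
      linarith
    have hpi := Nat.prime_iff_prime_int.mp hp
    have hsmall : ∀ z : ℤ, z ≠ 0 → z.natAbs < p → ¬ (p : ℤ) ∣ z := by
      intro z hz hzp hd
      exact absurd (Nat.le_of_dvd (Int.natAbs_pos.mpr hz) (Int.natCast_dvd.mp hd)) (by omega)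
    rcases hpi.dvd_or_dvd hdvd with h | h
    · rcases hpi.dvd_or_dvd h with h | h
      · exact hsmall a ha0 (by omega) (hpi.dvd_of_dvd_pow h)
      · exact hn h
    · exact hsmall K hK (by omega) h
  have hMeq : (M : ℂ) = -((a : ℂ) ^ (p * D) *
      ∑ i ∈ J, (c i : ℂ) * (n • Complex.exp (φ (β i)) - p • aeval (φ (β i)) g)) := by
    have e : ∑ i ∈ J, (c i : ℂ) * (n • Complex.exp (φ (β i)) - p • aeval (φ (β i)) g)
        = n * (∑ i ∈ J, (c i : ℂ) * Complex.exp (φ (β i)))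
          - p * ∑ i ∈ J, (c i : ℂ) * aeval (φ (β i)) g := by
      rw [Finset.mul_sum, Finset.mul_sum, ← Finset.sum_sub_distrib]
      refine Finset.sum_congr rfl fun i _ => ?_
      rw [zsmul_eq_mul, nsmul_eq_mul]
      ring
    rw [e, eq_neg_of_add_eq_zero_right hsum, hM]
    push_cast
    rw [← hZ']
    ring
  have hbound : ‖(M : ℂ)‖ ≤ (∑ i ∈ J, |(c i : ℝ)|) *
      ((|(a : ℝ)| ^ D * b) ^ p / (p - 1).factorial) := by
    rw [hMeq, norm_neg, norm_mul, norm_pow, Complex.norm_intCast]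
    have h1 : ‖∑ i ∈ J, (c i : ℂ) * (n • Complex.exp (φ (β i)) - p • aeval (φ (β i)) g)‖
        ≤ ∑ i ∈ J, |(c i : ℝ)| * (b ^ p / (p - 1).factorial) := by
      refine norm_sum_le_of_le _ fun i hi => ?_
      rw [norm_mul, Complex.norm_intCast]
      refine mul_le_mul_of_nonneg_left (hr ?_) (abs_nonneg _)
      rw [mem_aroots]
      refine ⟨hfne, ?_⟩
      have h2 := hf (β i) (Finset.mem_image_of_mem _ hi)
      have h3 := aeval_algHom_apply (φ.restrictScalars ℤ) (β i) f
      rw [h2, map_zero] at h3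
      exact h3
    calc _ ≤ |(a : ℝ)| ^ (p * D) * ∑ i ∈ J, |(c i : ℝ)| * (b ^ p / (p - 1).factorial) := by
          gcongr
      _ = _ := by
          rw [← Finset.sum_mul, mul_pow, ← pow_mul, mul_comm D p]
          ring
  have h1 : (1 : ℝ) ≤ ‖(M : ℂ)‖ := by
    rw [Complex.norm_intCast]
    exact_mod_cast Int.one_le_abs hMne
  linarith

theorem aux_lindemann (α : ℂ) (hα : IsAlgebraic ℚ α) (m n : ℤ) (hn : ¬ IsUnit n)
    (hmn : IsCoprime m n) (h : (n : ℂ) * Complex.exp α = m) : False := by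
  classical
  set P := minpoly ℚ α with hP
  have hint : IsIntegral ℚ α := hα.isIntegral
  have hP0 : P ≠ 0 := minpoly.ne_zero hint
  let L := IntermediateField.adjoin ℚ (P.rootSet ℂ)
  have : P.IsSplittingField ℚ L :=
    IntermediateField.adjoin_rootSet_isSplittingField (IsAlgClosed.splits _)
  have : FiniteDimensional ℚ L := IsSplittingField.finiteDimensional L P
  have : IsGalois ℚ L := IsGalois.of_separable_splitting_field
    (p := P) (minpoly.irreducible hint).separable
  let φ : L →ₐ[ℚ] ℂ := L.val
  have hαL : α ∈ L := IntermediateField.subset_adjoin _ _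
    (by rw [mem_rootSet]; exact ⟨hP0, minpoly.aeval _ _⟩)
  let s : Finset L := (P.aroots L).toFinset
  have hs : ∀ x : L, x ∈ s ↔ aeval x P = 0 := by
    intro x
    simp [s, hP0]
  have hαs : (⟨α, hαL⟩ : L) ∈ s := by
    rw [hs]
    have h1 : φ (aeval (⟨α, hαL⟩ : L) P) = φ 0 := by
      rw [← aeval_algHom_apply, map_zero]
      exact minpoly.aeval ℚ α
    exact φ.injective h1
  let β : Finset L → L := fun t => ∑ x ∈ t, x
  let c : Finset L → ℤ := fun t => n ^ t.card * (-m) ^ (s \ t).card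
  have hprod : ∑ t ∈ s.powerset, (c t : ℂ) * Complex.exp (φ (β t)) = 0 := by
    have h0 : ∏ x ∈ s, ((n : ℂ) * Complex.exp (φ x) + (-m : ℂ)) = 0 := by
      refine Finset.prod_eq_zero hαs ?_
      change (n : ℂ) * Complex.exp α + (-m : ℂ) = 0
      rw [h]; ring
    rw [Finset.prod_add] at h0
    rw [← h0]
    refine Finset.sum_congr rfl fun t _ => ?_
    simp only [c, β, map_sum, Complex.exp_sum, Finset.prod_mul_distrib, Finset.prod_const]
    push_cast
    ring
  let T0 := s.powerset.filter (fun t => β t = 0)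
  let J := s.powerset.filter (fun t => ¬ β t = 0)
  have hK : ∑ t ∈ T0, c t ≠ 0 := by
    intro h0
    have hemp : (∅ : Finset L) ∈ T0 := by simp [T0, β]
    rw [← Finset.add_sum_erase _ _ hemp] at h0
    have hd : n ∣ ∑ t ∈ T0.erase ∅, c t := by
      refine Finset.dvd_sum fun t ht => ?_
      have : t ≠ ∅ := Finset.ne_of_mem_erase ht
      have : t.card ≠ 0 := by simpa using this
      exact (dvd_pow_self n this).mul_right _
    have hd2 : n ∣ c ∅ := by
      rw [eq_neg_of_add_eq_zero_left h0]
      exact hd.neg_right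
    have hcop : IsCoprime n (c ∅) := by
      have : c ∅ = (-m) ^ s.card := by simp [c]
      rw [this]
      exact hmn.symm.neg_right.pow_right
    exact hn (hcop.isUnit_of_dvd' dvd_rfl hd2)
  refine aux_core φ J c β (∑ t ∈ T0, c t) hK ?_ ?_ ?_
  · intro t ht
    exact (Finset.mem_filter.mp ht).2
  · rw [← hprod, ← Finset.sum_filter_add_sum_filter_not s.powerset (fun t => β t = 0)]
    congr 1
    push_cast
    refine Finset.sum_congr rfl fun t ht => ?_
    rw [(Finset.mem_filter.mp ht).2]
    simp
  · intro g
    rw [IsGalois.mem_range_algebraMap_iff_fixed]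
    intro σ
    have hσs : ∀ x : L, σ x ∈ s ↔ x ∈ s := by
      intro x
      rw [hs, hs]
      have : aeval (σ x) P = σ (aeval x P) := aeval_algHom_apply (σ : L →ₐ[ℚ] L) x P
      rw [this]
      simp
    have hβσ : ∀ t, β (t.map σ.toEquiv.toEmbedding) = σ (β t) := by
      intro t
      simp [β]
    have hsσ : s.map σ.toEquiv.toEmbedding = s := by
      refine Finset.eq_of_subset_of_card_le ?_ (by simp)
      intro y hy
      obtain ⟨x, hx, rfl⟩ := Finset.mem_map.mp hy
      exact (hσs x).mpr hx
    have hcσ : ∀ t, c (t.map σ.toEquiv.toEmbedding) = c t := by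
      intro t
      simp only [c, Finset.card_map]
      conv_lhs => rw [← hsσ, ← Finset.map_sdiff, Finset.card_map]
    have hJσ : ∀ t ∈ J, t.map σ.toEquiv.toEmbedding ∈ J := by
      intro t ht
      obtain ⟨h1, h2⟩ := Finset.mem_filter.mp ht
      refine Finset.mem_filter.mpr ⟨?_, ?_⟩
      · rw [Finset.mem_powerset] at h1 ⊢
        rw [← hsσ]
        exact Finset.map_subset_map.mpr h1
      · rw [hβσ]
        simpa using h2
    have hJ : J.image (fun t => t.map σ.toEquiv.toEmbedding) = J := by
      refine Finset.eq_of_subset_of_card_le ?_ ?_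
      · intro y hy
        obtain ⟨x, hx, rfl⟩ := Finset.mem_image.mp hy
        exact hJσ x hx
      · rw [Finset.card_image_of_injective _ (Finset.map_injective _)]
    rw [map_sum]
    conv_rhs => rw [← hJ]
    rw [Finset.sum_image (fun x _ y _ hxy => Finset.map_injective _ hxy)]
    refine Finset.sum_congr rfl fun t _ => ?_
    rw [hcσ, hβσ, map_mul, map_intCast]
    congr 1
    exact (aeval_algHom_apply ((σ : L →ₐ[ℚ] L).restrictScalars ℤ) (β t) g).symm

theorem aux_coprime (m n : ℕ) (hm : 0 < m) (hn : 0 < n) (hmn : m ≠ n) (hc : Nat.Coprime m n) :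
    Transcendental ℚ (Real.log ((m : ℝ) / (n : ℝ))) := by
  intro halg
  have hm' : (m : ℝ) ≠ 0 := by positivity
  have hn' : (n : ℝ) ≠ 0 := by positivity
  have halg' : IsAlgebraic ℚ ((Real.log ((m : ℝ) / (n : ℝ)) : ℝ) : ℂ) :=
    halg.algebraMap (A := ℂ)
  have hexp : Complex.exp ((Real.log ((m : ℝ) / (n : ℝ)) : ℝ) : ℂ) = (m : ℂ) / n := by
    rw [← Complex.ofReal_exp, Real.exp_log (by positivity)]
    push_cast
    rfl
  have hmc : (m : ℂ) ≠ 0 := by exact_mod_cast hm.ne'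
  have hnc : (n : ℂ) ≠ 0 := by exact_mod_cast hn.ne'
  have hcz : IsCoprime (m : ℤ) (n : ℤ) := Nat.isCoprime_iff_coprime.mpr hc
  by_cases h1 : n = 1
  · refine aux_lindemann _ halg'.neg n m ?_ hcz.symm ?_
    · rw [Int.ofNat_isUnit, Nat.isUnit_iff]
      omega
    · rw [Complex.exp_neg, hexp]
      push_cast
      field_simp
  · refine aux_lindemann _ halg' m n ?_ hcz ?_
    · rw [Int.ofNat_isUnit, Nat.isUnit_iff]
      exact h1
    · rw [hexp]
      push_cast
      field_simp

/-- For positive naturals `m ≠ n`, the real number `log (m / n)` is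
transcendental over `ℚ`. -/
theorem log_rat_transcendental (m n : ℕ) (hm : 0 < m) (hn : 0 < n) (hmn : m ≠ n) :
    Transcendental ℚ (Real.log ((m : ℝ) / (n : ℝ))) := by
  obtain ⟨d, m', n', hd, hc, rfl, rfl⟩ := Nat.exists_coprime' (m := m) (n := n)
    (Nat.gcd_pos_of_pos_left n hm)
  have hdr : (d : ℝ) ≠ 0 := by positivity
  have e : ((m' * d : ℕ) : ℝ) / ((n' * d : ℕ) : ℝ) = (m' : ℝ) / n' := by
    push_cast
    exact mul_div_mul_right _ _ hdr
  rw [e]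
  exact aux_coprime m' n' (Nat.pos_of_mul_pos_right hm) (Nat.pos_of_mul_pos_right hn)
    (fun h => hmn (by rw [h])) hc
end

section
/- There are no positive natural numbers m₁, n₁, m₂, n₂, m₃, n₃ such that ((m₂/n₂) : ℝ)^((m₃/n₃) : ℝ) · log(m₁/n₁) = 1, where ^ is the real power function and log is the real natural logarithm. -/
open Polynomial in
lemma hl_int_of_fixed {L : Type*} [Field L] [Algebra ℚ L] [FiniteDimensional ℚ L] [IsGalois ℚ L]
    (x : L) (hx : IsIntegral ℤ x) (hfix : ∀ τ : L ≃ₐ[ℚ] L, τ x = x) : ∃ W : ℤ, (W : L) = x := by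
  have h1 : x ∈ (⊥ : IntermediateField ℚ L) := (IsGalois.mem_bot_iff_fixed x).2 hfix
  obtain ⟨y, rfl⟩ := IntermediateField.mem_bot.1 h1
  have h2 : IsIntegral ℤ y :=
    (isIntegral_algebraMap_iff (FaithfulSMul.algebraMap_injective ℚ L)).1 hx
  obtain ⟨W, rfl⟩ := IsIntegrallyClosed.isIntegral_iff.1 h2
  exact ⟨W, by simp⟩

open Polynomial in
lemma hl_integral_eval {L : Type*} [Field L] (D : ℤ) (x : L)
    (hx : IsIntegral ℤ ((D : L) * x)) (g : ℤ[X]) (m : ℕ) (hm : g.natDegree ≤ m) :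
    IsIntegral ℤ ((D : L) ^ m * aeval x g) := by
  rw [aeval_eq_sum_range, Finset.mul_sum]
  refine IsIntegral.sum _ fun i hi => ?_
  have him : i ≤ m := by
    have := Finset.mem_range.1 hi
    omega
  have : (D : L) ^ m * (g.coeff i • x ^ i)
      = ((D ^ (m - i) * g.coeff i : ℤ) : L) * ((D : L) * x) ^ i := by
    have : (D : L) ^ m = (D : L) ^ (m - i) * (D : L) ^ i := by rw [← pow_add]; congr 1; omega
    rw [this, zsmul_eq_mul]
    push_cast
    ring
  rw [this]
  refine IsIntegral.mul ?_ (hx.pow i)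
  simpa using (isIntegral_algebraMap (R := ℤ) (A := L) (x := D ^ (m - i) * g.coeff i))

open Polynomial in
lemma hl_core {L : Type*} [Field L] [Algebra ℚ L] [FiniteDimensional ℚ L] [IsGalois ℚ L]
    (ι : L →+* ℂ) {I : Type*} [Fintype I] [MulAction (L ≃ₐ[ℚ] L) I] (β : I → L) (c : I → ℤ)
    (hβ : ∀ (τ : L ≃ₐ[ℚ] L) i, τ (β i) = β (τ • i))
    (hc : ∀ (τ : L ≃ₐ[ℚ] L) i, c (τ • i) = c i)
    [DecidablePred fun i => β i = 0]
    (C0 : ℤ) (hC0 : C0 = ∑ i with β i = 0, c i) (hne : C0 ≠ 0)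
    (hsum : ∑ i, (c i : ℂ) * Complex.exp (ι (β i)) = 0) : False := by
  classical
  have : CharZero L := algebraRat.charZero L
  have halg : ∀ i, IsAlgebraic ℤ (β i) := fun i =>
    (IsFractionRing.isAlgebraic_iff ℤ ℚ L).2 (Algebra.IsAlgebraic.isAlgebraic (β i))
  -- annihilating polynomials
  have hex : ∀ i, ∃ f : ℤ[X], f.coeff 0 ≠ 0 ∧ (β i ≠ 0 → aeval (β i) f = 0) := by
    intro i
    by_cases h : β i = 0
    · exact ⟨1, by simp, fun h' => (h' h).elim⟩
    · obtain ⟨f, hf1, hf2⟩ := (halg i).exists_nonzero_coeff_and_aeval_eq_zero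
        (mem_nonZeroDivisors_of_ne_zero h)
      exact ⟨f, hf1, fun _ => hf2⟩
  choose F hF0 hF using hex
  set f : ℤ[X] := ∏ i, F i with hf
  have hf0 : f.eval 0 ≠ 0 := by
    rw [hf, eval_prod]
    refine Finset.prod_ne_zero_iff.2 fun i _ => ?_
    rw [← coeff_zero_eq_eval_zero]
    exact hF0 i
  have hfne : f ≠ 0 := by
    rintro h
    rw [h] at hf0
    simp at hf0
  have hroot : ∀ i, β i ≠ 0 → ι (β i) ∈ f.aroots ℂ := by
    intro i hi
    rw [mem_aroots]
    refine ⟨hfne, ?_⟩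
    have h1 : aeval (β i) f = 0 := by
      rw [hf, map_prod]
      exact Finset.prod_eq_zero (Finset.mem_univ i) (hF i hi)
    have h2 : aeval (ι (β i)) f = ι (aeval (β i) f) := by
      have := (Polynomial.aeval_algHom_apply (ι.toIntAlgHom) (β i) f)
      simpa using this
    rw [h2, h1, map_zero]
  -- common denominator
  have hden : ∃ D : ℤ, D ≠ 0 ∧ ∀ i, IsIntegral ℤ ((D : L) * β i) := by
    have : ∀ i, ∃ y : ℤ, y ≠ 0 ∧ IsIntegral ℤ ((y : L) * β i) := by
      intro i
      obtain ⟨y, hy, h⟩ := (halg i).exists_integral_multiple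
      exact ⟨y, hy, by simpa [zsmul_eq_mul] using h⟩
    choose d hd hd' using this
    refine ⟨∏ i, d i, Finset.prod_ne_zero_iff.2 fun i _ => hd i, fun i => ?_⟩
    rw [← Finset.prod_erase_mul _ _ (Finset.mem_univ i)]
    push_cast
    rw [mul_assoc]
    refine IsIntegral.mul ?_ (hd' i)
    simpa using (isIntegral_algebraMap (R := ℤ) (A := L) (x := ∏ j ∈ Finset.univ.erase i, d j))
  obtain ⟨D, hD, hDint⟩ := hden
  obtain ⟨K, hK⟩ := LindemannWeierstrass.exp_polynomial_approx f hf0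
  set M : ℝ := ∑ i, |(c i : ℝ)| with hM
  set E : ℝ := K * |(D : ℝ)| ^ f.natDegree with hE
  have hlim : Filter.Tendsto (fun p : ℕ => M * E * (E ^ p / (p.factorial : ℝ))) Filter.atTop
      (nhds 0) := by
    simpa using (FloorSemiring.tendsto_pow_div_factorial_atTop E).const_mul (M * E)
  obtain ⟨N, hN⟩ := Filter.eventually_atTop.1 (hlim.eventually (gt_mem_nhds (zero_lt_one)))
  obtain ⟨p, hpge, hp⟩ := Nat.exists_infinite_primes
    (N + (eval 0 f).natAbs + D.natAbs + C0.natAbs + 1)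
  obtain ⟨n, hn, g, hg, happ⟩ := hK p (by omega) hp
  set m := p * f.natDegree with hm
  set U : Finset I := Finset.univ.filter fun i => β i ≠ 0 with hU
  -- the integer
  obtain ⟨W, hW⟩ : ∃ W : ℤ, (W : L) = ∑ i ∈ U, (c i : L) * ((D : L) ^ m * aeval (β i) g) := by
    apply hl_int_of_fixed
    · refine IsIntegral.sum _ fun i _ => IsIntegral.mul ?_ ?_
      · simpa using (isIntegral_algebraMap (R := ℤ) (A := L) (x := c i))
      · exact hl_integral_eval D _ (hDint i) g m (hg.trans (Nat.sub_le _ _))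
    · intro τ
      rw [map_sum]
      refine Finset.sum_bij (fun i _ => τ • i) ?_ ?_ ?_ ?_
      · intro i hi
        simp only [hU, Finset.mem_filter, Finset.mem_univ, true_and] at hi ⊢
        rw [← hβ]
        simpa using hi
      · intro i _ j _ h
        exact MulAction.injective τ h
      · intro j hj
        refine ⟨τ⁻¹ • j, ?_, by simp⟩
        simp only [hU, Finset.mem_filter, Finset.mem_univ, true_and] at hj ⊢
        rw [← hβ]
        simpa using hj
      · intro i _
        have : τ (aeval (β i) g) = aeval (β (τ • i)) g := by
          rw [← hβ]
          have := (Polynomial.aeval_algHom_apply ((τ : L →+* L).toIntAlgHom) (β i) g)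
          simpa using this.symm
        rw [map_mul, map_mul, this, hc]
        simp
  have hWC : (W : ℂ) = ∑ i ∈ U, (c i : ℂ) * ((D : ℂ) ^ m * aeval (ι (β i)) g) := by
    have := congrArg ι hW
    rw [map_intCast, map_sum] at this
    rw [this]
    refine Finset.sum_congr rfl fun i _ => ?_
    have h2 : aeval (ι (β i)) g = ι (aeval (β i) g) := by
      have := (Polynomial.aeval_algHom_apply (ι.toIntAlgHom) (β i) g)
      simpa using this
    rw [h2]
    simp
  have hsplit : (C0 : ℂ) + ∑ i ∈ U, (c i : ℂ) * Complex.exp (ι (β i)) = 0 := by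
    rw [← hsum, ← Finset.sum_filter_add_sum_filter_not Finset.univ (fun i => β i = 0), hC0]
    congr 1
    push_cast
    refine Finset.sum_congr rfl fun i hi => ?_
    rw [(Finset.mem_filter.1 hi).2]
    simp
  set Z : ℤ := D ^ m * n * C0 + p * W with hZ
  have hpi : Prime (p : ℤ) := Nat.prime_iff_prime_int.1 hp
  have hZne : Z ≠ 0 := by
    intro h
    have h1 : (p : ℤ) ∣ D ^ m * n * C0 := by
      refine ⟨-W, ?_⟩
      linarith
    rcases hpi.dvd_or_dvd h1 with h2 | h2
    · rcases hpi.dvd_or_dvd h2 with h3 | h3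
      · have h4 := Int.natCast_dvd.1 (hpi.dvd_of_dvd_pow h3)
        have := Nat.le_of_dvd (Int.natAbs_pos.2 hD) h4
        omega
      · exact hn h3
    · have := Nat.le_of_dvd (Int.natAbs_pos.2 hne) (Int.natCast_dvd.1 h2)
      omega
  have hZC : (Z : ℂ) = -((D : ℂ) ^ m * ∑ i ∈ U, (c i : ℂ) *
      (n • Complex.exp (ι (β i)) - p • aeval (ι (β i)) g)) := by
    have h1 : (C0 : ℂ) = -∑ i ∈ U, (c i : ℂ) * Complex.exp (ι (β i)) :=
      eq_neg_of_add_eq_zero_left hsplit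
    rw [hZ]
    push_cast
    rw [h1, hWC]
    simp only [zsmul_eq_mul, nsmul_eq_mul, mul_neg, Finset.mul_sum, mul_sub,
      Finset.sum_sub_distrib, neg_sub]
    rw [neg_add_eq_sub]
    congr 1 <;> refine Finset.sum_congr rfl fun i _ => by ring
  have hone : (1 : ℝ) ≤ ‖(Z : ℂ)‖ := by
    rw [Complex.norm_intCast]
    exact_mod_cast Int.one_le_abs hZne
  have hb : ‖(Z : ℂ)‖ ≤ |(D : ℝ)| ^ m * (M * (K ^ p / (p - 1).factorial)) := by
    rw [hZC, norm_neg, norm_mul, norm_pow, Complex.norm_intCast]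
    refine mul_le_mul_of_nonneg_left ?_ (by positivity)
    by_cases hUe : U.Nonempty
    · obtain ⟨j, hj⟩ := hUe
      have hpos : 0 ≤ K ^ p / ((p - 1).factorial : ℝ) :=
        (norm_nonneg _).trans (happ (hroot j (Finset.mem_filter.1 hj).2))
      refine (norm_sum_le _ _).trans ?_
      calc _ ≤ ∑ i ∈ U, |(c i : ℝ)| * (K ^ p / ((p - 1).factorial : ℝ)) := by
            refine Finset.sum_le_sum fun i hi => ?_
            rw [norm_mul, Complex.norm_intCast]
            exact mul_le_mul_of_nonneg_left (happ (hroot i (Finset.mem_filter.1 hi).2))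
              (abs_nonneg _)
        _ ≤ ∑ i, |(c i : ℝ)| * (K ^ p / ((p - 1).factorial : ℝ)) :=
            Finset.sum_le_sum_of_subset_of_nonneg (Finset.subset_univ _)
              fun i _ _ => mul_nonneg (abs_nonneg _) hpos
        _ = _ := by rw [hM, Finset.sum_mul]
    · exfalso
      rw [Finset.not_nonempty_iff_eq_empty] at hUe
      rw [hUe] at hsplit
      simp at hsplit
      exact hne hsplit
  have hlt := hN (p - 1) (by omega)
  have heq : |(D : ℝ)| ^ m * (M * (K ^ p / (p - 1).factorial))
      = M * E * (E ^ (p - 1) / ((p - 1).factorial : ℝ)) := by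
    have h1 : E * E ^ (p - 1) = K ^ p * |(D : ℝ)| ^ m := by
      rw [← pow_succ', Nat.sub_add_cancel hp.one_le, hE, mul_pow, ← pow_mul, hm, mul_comm p]
    calc _ = M * (K ^ p * |(D : ℝ)| ^ m) / (p - 1).factorial := by ring
      _ = _ := by rw [← h1]; ring
  rw [heq] at hb
  linarith

open Polynomial in
lemma hl_galois {L : Type*} [Field L] [Algebra ℚ L] [FiniteDimensional ℚ L] [IsGalois ℚ L]
    (ι : L →+* ℂ) (a : L) (A B : ℤ) (hB : B ≠ 0)
    (hinj : Function.Injective fun k : ℕ => ((A : ℚ) / B) ^ k)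
    (hexp : Complex.exp (ι a) = (A : ℂ) / B) : False := by
  classical
  have : CharZero L := algebraRat.charZero L
  let G := L ≃ₐ[ℚ] L
  let γ : Finset G → L := fun S => ∑ σ ∈ S, σ a
  let Q : ℚ[X] := ∑ S : Finset G with γ S = 0, (-X) ^ (Sᶜ).card
  have hQ : Q ≠ 0 := by
    intro h
    have h1 : Q.coeff (Fintype.card G) = (-1) ^ (Fintype.card G) := by
      simp only [Q, finsetSum_coeff]
      rw [Finset.sum_eq_single ∅]
      · rw [neg_pow, ← C_1, ← C_neg, ← C_pow, coeff_C_mul]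
        simp
      · intro S _ hS
        rw [neg_pow, ← C_1, ← C_neg, ← C_pow, coeff_C_mul, coeff_X_pow, if_neg, mul_zero]
        have := Finset.card_pos.2 (Finset.nonempty_iff_ne_empty.2 hS)
        have := Finset.card_compl_add_card S
        omega
      · intro h
        exact (h (by simp [γ])).elim
    rw [h, coeff_zero] at h1
    exact pow_ne_zero _ (by norm_num) h1.symm
  obtain ⟨k, hk1, hk⟩ : ∃ k : ℕ, 0 < k ∧ Q.eval (((A : ℚ) / B) ^ k) ≠ 0 := by
    by_contra! hcon
    apply hQ
    refine eq_zero_of_infinite_isRoot Q ?_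
    refine Set.Infinite.mono ?_ ((Set.Ioi_infinite 0).image hinj.injOn)
    rintro _ ⟨k, hk, rfl⟩
    exact hcon k hk
  let c : Finset G → ℤ := fun S => (B ^ k) ^ S.card * (-A ^ k) ^ (Sᶜ).card
  let β : Finset G → L := fun S => k * γ S
  let act : MulAction G (Finset G) := Finset.mulActionFinset
  have hcardc : ∀ (S : Finset G), (Sᶜ).card = Fintype.card G - S.card := fun S =>
    Finset.card_compl S
  refine hl_core ι β c ?_ ?_ (∑ S with β S = 0, c S) rfl ?_ ?_
  · intro τ S
    simp only [β, γ, map_mul, map_natCast, map_sum]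
    congr 1
    change _ = ∑ σ ∈ S.image (fun σ => τ * σ), σ a
    rw [Finset.sum_image (fun x _ y _ h => mul_left_cancel h)]
    rfl
  · intro τ S
    have : (τ • S).card = S.card := Finset.card_smul_finset τ S
    simp only [c, hcardc, this]
  · intro h
    apply hk
    have h1 : (((∑ S with β S = 0, c S : ℤ)) : ℚ) = 0 := by rw [h]; simp
    have hBQ : (B : ℚ) ≠ 0 := by exact_mod_cast hB
    have h2 : (((∑ S with β S = 0, c S : ℤ)) : ℚ)
        = ((B : ℚ) ^ k) ^ (Fintype.card G) * Q.eval (((A : ℚ) / B) ^ k) := by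
      simp only [Q, eval_finsetSum, Finset.mul_sum]
      push_cast
      have hfil : (Finset.univ.filter fun S => β S = 0) = Finset.univ.filter fun S => γ S = 0 := by
        ext S
        simp [β, hk1.ne']
      rw [hfil]
      refine Finset.sum_congr rfl fun S _ => ?_
      have h3 : Fintype.card G = S.card + (Sᶜ).card := by
        rw [add_comm, Finset.card_compl_add_card]
      simp only [c, eval_pow, eval_neg, eval_X]
      rw [h3, pow_add, mul_assoc, ← mul_pow]
      push_cast
      congr 2
      rw [mul_neg, ← mul_pow, mul_div_cancel₀ _ hBQ]
    rw [h1] at h2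
    rcases mul_eq_zero.1 h2.symm with h3 | h3
    · exact absurd h3 (by positivity)
    · exact h3
  · have hBC : (B : ℂ) ≠ 0 := by exact_mod_cast hB
    have h1 : ∏ σ : G, ((B : ℂ) ^ k * Complex.exp (ι (k * σ a)) + (-(A : ℂ) ^ k)) = 0 := by
      refine Finset.prod_eq_zero (Finset.mem_univ (1 : G)) ?_
      rw [AlgEquiv.one_apply, map_mul, map_natCast, Complex.exp_nat_mul, hexp, div_pow]
      field_simp
      ring
    rw [Finset.prod_add] at h1
    rw [← h1, Finset.powerset_univ]
    refine Finset.sum_congr rfl fun S _ => ?_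
    simp only [Finset.prod_mul_distrib, Finset.prod_const, c, β, γ, ← Finset.compl_eq_univ_sdiff]
    rw [← Complex.exp_sum, Finset.mul_sum, map_sum]
    push_cast
    ring

lemma hl_main (a : ℂ) (ha : IsAlgebraic ℚ a) (A B : ℤ) (hB : B ≠ 0)
    (hinj : Function.Injective fun k : ℕ => ((A : ℚ) / B) ^ k)
    (hexp : Complex.exp a = (A : ℂ) / B) : False := by
  let f := minpoly ℚ a
  have hf : f ≠ 0 := minpoly.ne_zero ha.isIntegral
  let L := IntermediateField.adjoin ℚ (f.rootSet ℂ)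
  have hs : f.IsSplittingField ℚ L :=
    IntermediateField.adjoin_rootSet_isSplittingField (IsAlgClosed.splits _)
  have hn : Normal ℚ L := Normal.of_isSplittingField f
  have : FiniteDimensional ℚ L := Polynomial.IsSplittingField.finiteDimensional L f
  have : IsGalois ℚ L := { }
  have hmem : a ∈ L := IntermediateField.subset_adjoin ℚ _
    (Polynomial.mem_rootSet.2 ⟨hf, minpoly.aeval ℚ a⟩)
  exact hl_galois (L := L) (algebraMap L ℂ) ⟨a, hmem⟩ A B hB hinj hexp

/-- Equation (3) of the paper has no solutions in positive naturals:
`(m₂/n₂) ^ (m₃/n₃) * log (m₁/n₁) = 1` is impossible. -/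
theorem no_solution_eq3 :
    ¬ ∃ m₁ n₁ m₂ n₂ m₃ n₃ : ℕ, 0 < m₁ ∧ 0 < n₁ ∧ 0 < m₂ ∧ 0 < n₂ ∧ 0 < m₃ ∧ 0 < n₃ ∧
      ((m₂ : ℝ) / (n₂ : ℝ)) ^ ((m₃ : ℝ) / (n₃ : ℝ)) *
        Real.log ((m₁ : ℝ) / (n₁ : ℝ)) = 1 := by
  rintro ⟨m₁, n₁, m₂, n₂, m₃, n₃, h1, h2, h3, h4, h5, h6, h⟩
  have p1 : (0 : ℝ) < m₁ := by exact_mod_cast h1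
  have p2 : (0 : ℝ) < n₁ := by exact_mod_cast h2
  have p3 : (0 : ℝ) < m₂ := by exact_mod_cast h3
  have p4 : (0 : ℝ) < n₂ := by exact_mod_cast h4
  have p6 : (0 : ℝ) < n₃ := by exact_mod_cast h6
  set b : ℝ := ((m₂ : ℝ) / (n₂ : ℝ)) ^ ((m₃ : ℝ) / (n₃ : ℝ)) with hb
  set x : ℝ := Real.log ((m₁ : ℝ) / (n₁ : ℝ)) with hx
  have hbpow : b ^ n₃ = ((m₂ : ℝ) / (n₂ : ℝ)) ^ m₃ := by
    rw [hb, ← Real.rpow_natCast, ← Real.rpow_mul (by positivity), div_mul_cancel₀ _ p6.ne',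
      Real.rpow_natCast]
  have hbalg : IsAlgebraic ℚ b := by
    refine IsAlgebraic.of_pow h6 ?_
    rw [hbpow]
    have := isAlgebraic_algebraMap (R := ℚ) (A := ℝ) (((m₂ : ℚ) / n₂) ^ m₃)
    simpa using this
  have hxb : x = b⁻¹ := eq_inv_of_mul_eq_one_right h
  have hbpos : 0 < b := by positivity
  have hxpos : 0 < x := by rw [hxb]; positivity
  have hxalg : IsAlgebraic ℚ x := by rw [hxb]; exact hbalg.inv
  have hex : Real.exp x = (m₁ : ℝ) / n₁ := Real.exp_log (by positivity)
  have hgt : (1 : ℝ) < (m₁ : ℝ) / n₁ := by rw [← hex]; exact Real.one_lt_exp_iff.2 hxpos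
  have hgtQ : (1 : ℚ) < (m₁ : ℚ) / n₁ := by
    rw [← Rat.cast_lt (K := ℝ)]
    simpa using hgt
  refine hl_main (x : ℂ) (hxalg.algebraMap (A := ℂ)) m₁ n₁ (by exact_mod_cast h2.ne') ?_ ?_
  · simpa using pow_right_injective₀ (by linarith) hgtQ.ne'
  · rw [← Complex.ofReal_exp, hex]
    push_cast
    rfl
end

section
/- The number e (the base of the natural logarithm, Real.exp 1) cannot be written in the form (m₁/n₁)^((m₂/n₂)^(m₃/n₃)) for any positive natural numbers m₁, n₁, m₂, n₂, m₃, n₃, where ^ denotes the real power function. -/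
open Polynomial

lemma aux_integral {L : Type*} [Field L] (B : ℕ) (s : L) (hs : IsIntegral ℤ ((B : L) * s))
    (g : ℤ[X]) (M : ℕ) (hg : g.natDegree ≤ M) :
    IsIntegral ℤ ((B : L) ^ M * aeval s g) := by
  have hBi : IsIntegral ℤ (B : L) := by
    simpa using isIntegral_algebraMap (R := ℤ) (A := L) (x := (B : ℤ))
  rw [aeval_eq_sum_range' (Nat.lt_succ_of_le hg), Finset.mul_sum]
  refine IsIntegral.sum _ fun i hi => ?_
  have hi' : i ≤ M := Nat.lt_succ_iff.1 (Finset.mem_range.1 hi)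
  have : (B : L) ^ M * (g.coeff i • s ^ i)
      = ((g.coeff i : ℤ) : L) * ((B : L) ^ (M - i) * ((B : L) * s) ^ i) := by
    rw [mul_pow, zsmul_eq_mul]
    conv_lhs => rw [← Nat.sub_add_cancel hi', pow_add]
    ring
  rw [this]
  exact (isIntegral_algebraMap (R := ℤ) (A := L) (x := g.coeff i)).mul
    ((hBi.pow _).mul (hs.pow i))

lemma aux_rat {L : Type*} [Field L] [Algebra ℚ L] [FiniteDimensional ℚ L]
    [IsGalois ℚ L] (R : Finset L) (hR : ∀ σ : L ≃ₐ[ℚ] L, ∀ r ∈ R, σ r ∈ R)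
    (w : ℕ → ℤ) (g : ℤ[X]) :
    ∃ q : ℚ, algebraMap ℚ L q =
      ∑ S ∈ R.powerset, (w S.card : L) * aeval (∑ r ∈ S, r) g := by
  classical
  have := (IsGalois.mem_range_algebraMap_iff_fixed (F := ℚ)
    (∑ S ∈ R.powerset, (w S.card : L) * aeval (∑ r ∈ S, r) g)).2 ?_
  · exact this
  intro σ
  rw [map_sum]
  refine Finset.sum_bij' (fun S _ => S.image σ) (fun S _ => S.image σ.symm) ?_ ?_ ?_ ?_ ?_
  · intro S hS
    rw [Finset.mem_powerset] at hS ⊢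
    intro x hx
    obtain ⟨y, hy, rfl⟩ := Finset.mem_image.1 hx
    exact hR σ y (hS hy)
  · intro S hS
    rw [Finset.mem_powerset] at hS ⊢
    intro x hx
    obtain ⟨y, hy, rfl⟩ := Finset.mem_image.1 hx
    exact hR σ.symm y (hS hy)
  · intro S hS
    simp [Finset.image_image, Function.comp_def]
  · intro S hS
    simp [Finset.image_image, Function.comp_def]
  · intro S hS
    rw [Finset.card_image_of_injective _ σ.injective,
      Finset.sum_image (fun x _ y _ h => σ.injective h), map_mul, map_intCast, ← map_sum]
    congr 1
    exact (aeval_algHom_apply (σ.toAlgHom.restrictScalars ℤ) _ g).symm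

lemma aux_int {L : Type*} [Field L] [Algebra ℚ L] [FiniteDimensional ℚ L]
    [IsGalois ℚ L] (R : Finset L) (hR : ∀ σ : L ≃ₐ[ℚ] L, ∀ r ∈ R, σ r ∈ R)
    (B : ℕ) (hB : ∀ r ∈ R, IsIntegral ℤ ((B : L) * r))
    (w : ℕ → ℤ) (g : ℤ[X]) (M : ℕ) (hg : g.natDegree ≤ M) :
    ∃ z : ℤ, (z : L) = (B : L) ^ M *
      ∑ S ∈ R.powerset, (w S.card : L) * aeval (∑ r ∈ S, r) g := by
  obtain ⟨q, hq⟩ := aux_rat R hR w g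
  have hint : IsIntegral ℤ ((B : L) ^ M *
      ∑ S ∈ R.powerset, (w S.card : L) * aeval (∑ r ∈ S, r) g) := by
    rw [Finset.mul_sum]
    refine IsIntegral.sum _ fun S hS => ?_
    rw [mul_left_comm]
    refine (isIntegral_algebraMap (R := ℤ) (A := L) (x := w S.card)).mul
      (aux_integral B _ ?_ g M hg)
    rw [Finset.mul_sum]
    exact IsIntegral.sum _ fun r hr => hB r (Finset.mem_powerset.1 hS hr)
  rw [← hq] at hint ⊢
  have h2 : (B : L) ^ M * algebraMap ℚ L q = algebraMap ℚ L ((B : ℚ) ^ M * q) := by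
    rw [map_mul, map_pow, map_natCast]
  rw [h2] at hint ⊢
  rw [isIntegral_algebraMap_iff (algebraMap ℚ L).injective] at hint
  obtain ⟨z, hz⟩ := IsIntegrallyClosed.isIntegral_iff.1 hint
  refine ⟨z, ?_⟩
  rw [← hz]; simp

/-- an integer polynomial vanishing at prescribed nonzero algebraic numbers, but not at zero -/
lemma aux_poly (T : Finset ℂ) (hT : ∀ t ∈ T, t ≠ 0 ∧ IsAlgebraic ℤ t) :
    ∃ f : ℤ[X], f.eval 0 ≠ 0 ∧ ∀ t ∈ T, t ∈ f.aroots ℂ := by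
  have h : ∀ t : ℂ, ∃ f : ℤ[X], t ∈ T → f.eval 0 ≠ 0 ∧ aeval t f = 0 := by
    intro t
    by_cases ht : t ∈ T
    · obtain ⟨f, h1, h2⟩ := (hT t ht).2.exists_nonzero_coeff_and_aeval_eq_zero
        (mem_nonZeroDivisors_of_ne_zero (hT t ht).1)
      exact ⟨f, fun _ => ⟨by rwa [← coeff_zero_eq_eval_zero], h2⟩⟩
    · exact ⟨0, fun h => absurd h ht⟩
  choose F hF using h
  have h0 : (∏ t ∈ T, F t).eval 0 ≠ 0 := by
    rw [eval_prod]
    exact Finset.prod_ne_zero_iff.2 fun t ht => (hF t ht).1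
  refine ⟨∏ t ∈ T, F t, h0, fun t ht => ?_⟩
  rw [mem_aroots]
  refine ⟨fun h => h0 (by rw [h]; simp), ?_⟩
  rw [map_prod]
  exact Finset.prod_eq_zero ht (hF t ht).2

lemma aux_small (W x : ℝ) (K : ℕ) :
    ∃ p : ℕ, p.Prime ∧ K < p ∧ W * (x ^ p / (p - 1).factorial) < 1 := by
  have h := ((FloorSemiring.tendsto_pow_div_factorial_atTop x).const_mul (W * x))
  rw [mul_zero] at h
  obtain ⟨n, hn⟩ := Filter.eventually_atTop.1 (h.eventually (gt_mem_nhds one_pos))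
  obtain ⟨p, hp, hpp⟩ := Nat.exists_infinite_primes (n + K + 1)
  refine ⟨p, hpp, by omega, ?_⟩
  have := hn (p - 1) (by omega)
  obtain ⟨m, rfl⟩ : ∃ m, p = m + 1 := ⟨p - 1, by omega⟩
  simp only [Nat.add_sub_cancel] at this ⊢
  rw [pow_succ]
  calc _ = _ := by ring
    _ < 1 := this

lemma aux_main {L : Type*} [Field L] [DecidableEq L] [Algebra ℚ L] [FiniteDimensional ℚ L]
    [IsGalois ℚ L] (ι : L →+* ℂ) (R : Finset L) (hR : ∀ σ : L ≃ₐ[ℚ] L, ∀ r ∈ R, σ r ∈ R)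
    (B : ℕ) (hB0 : B ≠ 0) (hB : ∀ r ∈ R, IsIntegral ℤ ((B : L) * r))
    (w : ℕ → ℤ) (k : ℤ) (hk : k ≠ 0) (T : Finset (Finset L)) (hT : T ⊆ R.powerset)
    (hT1 : ∀ S ∈ R.powerset, S ∈ T ↔ ∑ r ∈ S, r ≠ 0)
    (hkT : ∑ S ∈ R.powerset \ T, w S.card = k)
    (hsum : ∑ S ∈ R.powerset, (w S.card : ℂ) * Complex.exp (ι (∑ r ∈ S, r)) = 0) : False := by
  classical
  obtain ⟨f, hf0, hf⟩ := aux_poly (T.image fun S => ι (∑ r ∈ S, r)) (by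
    intro t ht
    obtain ⟨S, hS, rfl⟩ := Finset.mem_image.1 ht
    refine ⟨(map_ne_zero ι).2 ((hT1 S (hT hS)).1 hS), ?_⟩
    have h1 : IsAlgebraic ℚ (∑ r ∈ S, r) := Algebra.IsAlgebraic.isAlgebraic _
    have h2 : IsAlgebraic ℤ (∑ r ∈ S, r) := (IsFractionRing.isAlgebraic_iff ℤ ℚ L).2 h1
    exact h2.algHom ι.toIntAlgHom)
  obtain ⟨c, hc⟩ := LindemannWeierstrass.exp_polynomial_approx f hf0
  set d := f.natDegree with hd
  set W : ℝ := ∑ S ∈ T, |(w S.card : ℝ)| with hW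
  obtain ⟨p, hp, hpK, hpW⟩ := aux_small W ((B : ℝ) ^ d * c) ((eval 0 f).natAbs + k.natAbs + B)
  obtain ⟨n, hn, g, hg, hgr⟩ := hc p (by omega) hp
  obtain ⟨z, hz⟩ := aux_int R hR B hB w g (p * d) (by omega)
  -- transport to the complex numbers
  have hzC : (z : ℂ) = (B : ℂ) ^ (p * d) *
      ∑ S ∈ R.powerset, (w S.card : ℂ) * aeval (ι (∑ r ∈ S, r)) g := by
    have := congrArg ι hz
    rw [map_intCast, map_mul, map_pow, map_natCast, map_sum] at this
    rw [this]
    congr 1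
    refine Finset.sum_congr rfl fun S _ => ?_
    rw [map_mul, map_intCast]
    congr 1
    exact (aeval_algHom_apply ι.toIntAlgHom _ g).symm
  -- split the sums
  have hsplit : ∀ F : ℂ → ℂ, ∑ S ∈ R.powerset, (w S.card : ℂ) * F (ι (∑ r ∈ S, r)) =
      k * F 0 + ∑ S ∈ T, (w S.card : ℂ) * F (ι (∑ r ∈ S, r)) := by
    intro F
    rw [← Finset.sum_sdiff hT]
    congr 1
    rw [← hkT]
    push_cast
    rw [Finset.sum_mul]
    refine Finset.sum_congr rfl fun S hS => ?_
    rw [Finset.mem_sdiff] at hS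
    have : ∑ r ∈ S, r = 0 := by
      by_contra h
      exact hS.2 ((hT1 S hS.1).2 h)
    rw [this, map_zero]
  have e1 := hsplit Complex.exp
  have e2 := hsplit (fun x => aeval x g)
  rw [hsum, Complex.exp_zero] at e1
  rw [e2] at hzC
  have hg0 : aeval (0 : ℂ) g = ((g.coeff 0 : ℤ) : ℂ) := by
    rw [coeff_zero_eq_eval_zero, ← eq_intCast (algebraMap ℤ ℂ),
      ← aeval_algebraMap_apply_eq_algebraMap_eval, map_zero]
  rw [hg0] at hzC
  set E : ℂ := ∑ S ∈ T, (w S.card : ℂ) *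
    (n • Complex.exp (ι (∑ r ∈ S, r)) - p • aeval (ι (∑ r ∈ S, r)) g) with hE
  have hE2 : E = n * ∑ S ∈ T, (w S.card : ℂ) * Complex.exp (ι (∑ r ∈ S, r))
      - p * ∑ S ∈ T, (w S.card : ℂ) * aeval (ι (∑ r ∈ S, r)) g := by
    rw [hE, Finset.mul_sum, Finset.mul_sum, ← Finset.sum_sub_distrib]
    refine Finset.sum_congr rfl fun S _ => ?_
    rw [nsmul_eq_mul, zsmul_eq_mul]
    ring
  set Z : ℤ := n * k * B ^ (p * d) + p * (z - B ^ (p * d) * (k * g.coeff 0)) with hZ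
  have hEZ : (B : ℂ) ^ (p * d) * E = -(Z : ℂ) := by
    rw [hE2, hZ]
    push_cast
    linear_combination (n : ℂ) * (-(B : ℂ) ^ (p * d)) * e1 + (p : ℂ) * hzC
  have hZ0 : Z ≠ 0 := by
    intro h0
    have hdvd : (p : ℤ) ∣ n * k * B ^ (p * d) := by
      have : n * k * (B : ℤ) ^ (p * d) = p * (-(z - B ^ (p * d) * (k * g.coeff 0))) := by
        linear_combination h0
      exact ⟨_, this⟩
    have hpi : Prime (p : ℤ) := Nat.prime_iff_prime_int.1 hp
    rcases hpi.dvd_or_dvd hdvd with h | h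
    · rcases hpi.dvd_or_dvd h with h | h
      · exact hn h
      · have := Nat.le_of_dvd (Int.natAbs_pos.2 hk) (Int.natCast_dvd.1 h)
        omega
    · have h := hpi.dvd_of_dvd_pow h
      have := Nat.le_of_dvd (Nat.pos_of_ne_zero hB0) (Int.natCast_dvd_natCast.1 h)
      omega
  have hEn : ‖E‖ ≤ W * (c ^ p / (p - 1).factorial) := by
    rw [hE, hW, Finset.sum_mul]
    refine norm_sum_le_of_le _ fun S hS => ?_
    rw [norm_mul]
    gcongr
    · simp
    · exact hgr (hf _ (Finset.mem_image_of_mem _ hS))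
  have h1 : (1 : ℝ) ≤ ‖(B : ℂ) ^ (p * d) * E‖ := by
    rw [hEZ, norm_neg, Complex.norm_intCast]
    exact_mod_cast Int.one_le_abs hZ0
  rw [norm_mul, norm_pow, Complex.norm_natCast] at h1
  have h2 : (B : ℝ) ^ (p * d) * ‖E‖ ≤ (B : ℝ) ^ (p * d) * (W * (c ^ p / (p - 1).factorial)) := by
    gcongr
  have h3 : (B : ℝ) ^ (p * d) * (W * (c ^ p / (p - 1).factorial)) =
      W * (((B : ℝ) ^ d * c) ^ p / (p - 1).factorial) := by
    rw [mul_pow, ← pow_mul, mul_comm d p]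
    ring
  linarith

lemma aux_core_s5 (N A B : ℕ) {L : Type} {_ : Field L} {_ : Algebra ℚ L}
    (hL : IsSplittingField ℚ L (X ^ N - C ((A : ℚ) / B))) (hN : Even N) (hN0 : N ≠ 0) (hB : B ≠ 0)
    (β : ℝ) (hβ : 0 < β) (hβN : β ^ N = (A : ℝ) / B) (q : ℚ) (hq : Real.exp β = q) : False := by
  classical
  set P : ℚ[X] := X ^ N - C ((A : ℚ) / B) with hP
  have : CharZero L := algebraRat.charZero L
  have : FiniteDimensional ℚ L := IsSplittingField.finiteDimensional L P
  have hmonic : P.Monic := monic_X_pow_sub_C _ hN0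
  have : Normal ℚ L := Normal.of_isSplittingField P
  have : IsGalois ℚ L := ⟨⟩
  let R : Finset L := (P.rootSet L).toFinset
  have hmem : ∀ r : L, r ∈ R ↔ r ^ N = (A : L) / B := by
    intro r
    rw [Set.mem_toFinset, hmonic.mem_rootSet]
    simp [hP, sub_eq_zero]
  let ι : L →ₐ[ℚ] ℂ := IsSplittingField.lift L P (IsAlgClosed.splits _)
  have hβmem : ∃ r ∈ R, ι r = (β : ℂ) := by
    have h := (IsSplittingField.splits L P).image_rootSet ι
    have h2 : (β : ℂ) ∈ P.rootSet ℂ := by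
      rw [hmonic.mem_rootSet]
      have : (β : ℂ) ^ N = (A : ℂ) / B := by
        rw [← Complex.ofReal_pow, hβN]
        push_cast
        rfl
      simp [hP, this]
    rw [← h] at h2
    obtain ⟨r, hr, hr2⟩ := h2
    exact ⟨r, Set.mem_toFinset.2 hr, hr2⟩
  have hBL : (B : L) ≠ 0 := Nat.cast_ne_zero.2 hB
  -- the numerator and denominator
  have hq1 : 1 < q := by
    have : (1 : ℝ) < q := by rw [← hq]; exact Real.one_lt_exp_iff.2 hβ
    exact_mod_cast this
  have hnum : (q.den : ℤ) < q.num := by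
    have := Rat.num_div_den q
    have hd : (0 : ℚ) < q.den := by exact_mod_cast q.pos
    rw [← this, one_lt_div hd] at hq1
    exact_mod_cast hq1
  have hden : 0 < (q.den : ℤ) := by exact_mod_cast q.pos
  set a : ℤ := q.num with ha
  set b : ℤ := (q.den : ℤ) with hb
  have hcop : IsCoprime a b := Int.isCoprime_iff_gcd_eq_one.2 (by
    simpa [Int.gcd, ha, hb] using q.reduced)
  have hqab : Complex.exp (β : ℂ) * b = a := by
    rw [← Complex.ofReal_exp, hq]
    have : q * b = a := by rw [ha, hb]; exact_mod_cast Rat.mul_den_eq_num q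
    exact_mod_cast congrArg (fun x : ℚ => (x : ℂ)) this
  let w : ℕ → ℤ := fun i => (-1) ^ i * a ^ (R.card - i) * b ^ i
  let T : Finset (Finset L) := R.powerset.filter fun S => ∑ r ∈ S, r ≠ 0
  have hsumR : ∑ r ∈ R, r = 0 := by
    have h : ∑ r ∈ R, r = ∑ r ∈ R, -r := by
      refine Finset.sum_bij' (fun r _ => -r) (fun r _ => -r) ?_ ?_ ?_ ?_ ?_
      · intro r hr
        rw [hmem] at hr ⊢
        rw [hN.neg_pow, hr]
      · intro r hr
        rw [hmem] at hr ⊢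
        rw [hN.neg_pow, hr]
      · simp
      · simp
      · simp
    rw [Finset.sum_neg_distrib] at h
    exact self_eq_neg.1 h
  refine aux_main (L := L) (ι : L →+* ℂ) R ?_ B hB ?_ w (∑ S ∈ R.powerset \ T, w S.card) ?_ T
    (Finset.filter_subset _ _) ?_ rfl ?_
  · intro σ r hr
    rw [hmem] at hr ⊢
    rw [← map_pow, hr]
    simp
  · intro r hr
    rw [hmem] at hr
    refine IsIntegral.of_pow (Nat.pos_of_ne_zero hN0) ?_
    obtain ⟨m, rfl⟩ := Nat.exists_eq_succ_of_ne_zero hN0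
    have : ((B : L) * r) ^ (m + 1) = ((B ^ m * A : ℕ) : L) := by
      rw [mul_pow, hr]
      push_cast
      field_simp
      ring
    rw [this]
    simpa using isIntegral_algebraMap (R := ℤ) (A := L) (x := ((B ^ m * A : ℕ) : ℤ))
  · intro h0
    have hRT : R ∈ R.powerset \ T := by
      simp [T, hsumR]
    rw [← Finset.add_sum_erase _ _ hRT] at h0
    have hd : a ∣ ∑ S ∈ (R.powerset \ T).erase R, w S.card := by
      refine Finset.dvd_sum fun S hS => ?_
      rw [Finset.mem_erase, Finset.mem_sdiff, Finset.mem_powerset] at hS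
      have hlt : S.card < R.card := Finset.card_lt_card (hS.2.1.ssubset_of_ne hS.1)
      have : a ∣ a ^ (R.card - S.card) := dvd_pow_self _ (by omega)
      exact (this.mul_left _).mul_right _
    have hd2 : a ∣ w R.card := (Int.dvd_add_left hd).1 (by rw [h0]; exact dvd_zero _)
    have hw : w R.card = (-1) ^ R.card * b ^ R.card := by simp [w]
    rw [hw, ← mul_pow] at hd2
    have hu : IsUnit a := by
      have hc2 : IsCoprime a ((-1 * b) ^ R.card) := by
        refine IsCoprime.pow_right ?_
        simpa using hcop.neg_right
      exact hc2.isUnit_of_dvd' dvd_rfl hd2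
    rcases Int.isUnit_iff.1 hu with h | h <;> omega
  · intro S hS
    simp only [T, Finset.mem_filter, hS, true_and]
  · obtain ⟨r0, hr0, hr0β⟩ := hβmem
    have hprod : ∏ r ∈ R, ((a : ℂ) - b * Complex.exp (ι r)) = 0 := by
      refine Finset.prod_eq_zero hr0 ?_
      rw [hr0β, ← hqab]
      ring
    rw [Finset.prod_sub] at hprod
    rw [← hprod]
    refine Finset.sum_congr rfl fun S hS => ?_
    rw [Finset.mem_powerset] at hS
    rw [Finset.prod_const, Finset.card_sdiff_of_subset hS, Finset.prod_mul_distrib,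
      Finset.prod_const, ← Complex.exp_sum]
    simp only [w, RingHom.coe_coe, map_sum]
    push_cast
    ring

/-- The number `e` cannot be written as `(m₁/n₁) ^ ((m₂/n₂) ^ (m₃/n₃))`
for positive naturals, with `^` the real power function. -/
theorem exp_one_not_of_form :
    ¬ ∃ m₁ n₁ m₂ n₂ m₃ n₃ : ℕ, 0 < m₁ ∧ 0 < n₁ ∧ 0 < m₂ ∧ 0 < n₂ ∧ 0 < m₃ ∧ 0 < n₃ ∧
      Real.exp 1 =
        ((m₁ : ℝ) / (n₁ : ℝ)) ^ (((m₂ : ℝ) / (n₂ : ℝ)) ^ ((m₃ : ℝ) / (n₃ : ℝ))) := by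
  rintro ⟨m₁, n₁, m₂, n₂, m₃, n₃, h1, h2, h3, h4, h5, h6, h⟩
  have hm1 : (0 : ℝ) < m₁ := by exact_mod_cast h1
  have hn1 : (0 : ℝ) < n₁ := by exact_mod_cast h2
  have hm2 : (0 : ℝ) < m₂ := by exact_mod_cast h3
  have hn2 : (0 : ℝ) < n₂ := by exact_mod_cast h4
  have hn3 : (n₃ : ℝ) ≠ 0 := by exact_mod_cast h6.ne'
  set α : ℝ := ((m₂ : ℝ) / (n₂ : ℝ)) ^ ((m₃ : ℝ) / (n₃ : ℝ)) with hα
  have hα0 : 0 < α := Real.rpow_pos_of_pos (by positivity) _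
  have hq : (0 : ℝ) < (m₁ : ℝ) / n₁ := by positivity
  have hlog := congrArg Real.log h
  rw [Real.log_exp, Real.log_rpow hq] at hlog
  have hαn : α ^ n₃ = ((m₂ : ℝ) / n₂) ^ m₃ := by
    rw [hα, ← Real.rpow_natCast, ← Real.rpow_mul (by positivity), div_mul_cancel₀ _ hn3,
      Real.rpow_natCast]
  refine aux_core_s5 (2 * n₃) (n₂ ^ (2 * m₃)) (m₂ ^ (2 * m₃))
    (IsSplittingField.splittingField _) (even_two_mul _) (by omega)
    (pow_ne_zero _ h3.ne') α⁻¹ (inv_pos.2 hα0) ?_ ((m₁ : ℚ) / n₁) ?_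
  · rw [mul_comm 2 n₃, pow_mul, inv_pow, hαn]
    push_cast
    rw [mul_comm 2 m₃, pow_mul, pow_mul, ← div_pow, ← div_pow, ← inv_pow, inv_div]
  · have : α⁻¹ = Real.log ((m₁ : ℝ) / n₁) := by
      field_simp
      linarith
    rw [this, Real.exp_log hq]
    push_cast
    rfl
end
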